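/- Let $0<p\le 1$ and $-1<\alpha,\beta<\infty$, and set $\eta=(2+\alpha-p)/p$. If $T_{\mu,\beta}:L^p_a(\omega_\alpha)\to L^1_a(\omega_\beta)$ is compact, then $T_{\mu,\eta-1}(1)\in\mathcal{LB}^1_0$, i.e. $\lim_{|z|\to1^-}(1-|z|^2)\log\frac{2}{1-|z|^2}\,\big|\big(T_{\mu,\eta-1}(1)\big)'(z)\big|=0$. -/

import Mathlib

/-!
Put `s = (2 + a) / p`, so that `s > 1` and the symbol `T_{μ,η-1}(1)` has kernel exponent `s`.
Differentiating under the integral sign (`norm_deriv_Toep_one`), the claim becomes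
`log (2 / (1 - |z|²)) · ∫ f_z dμ → 0` as `|z| → 1`, where
`f_z(w) = w (1 - |z|²) / (1 - z̄ w) ^ (s + 1)` is one of the test functions `tf s j z` with `j = 1`.

The test functions with `j = 0, 1` are bounded in `L^p(ω_a)` by the Forelli–Rudin estimate
(`forelli_rudin`) and tend to zero locally uniformly as `|z| → 1`. Compactness therefore makes the
`L¹(ω_b)` norms of their images `T_{μ,b}(f_z)` vanish at the boundary (`tendsto_wnorm_tf`).

These images are tested, through Fubini's theorem (`norm_pairing_le`), against
`ψ(u) = (1 - |u|²)² G(z ū)`, where `G(y) = ∑ α_n y ^ n` is such that `ψ` is bounded. Orthogonality of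
monomials turns the pairing into `∫ f_z(w) ∑ α_n d_n (z w̄) ^ n dμ(w)` with explicit multipliers
`d_n` of order `n⁻²` (`pairing_kernel`), so such integrals vanish at the boundary
(`tendsto_pairing`). This is used twice.

* With `j = 0` and `α_n d_n` the Taylor coefficients of `(1 - x) ^ (-(s + 1))`, the integrand is
  positive, and `μ` satisfies a vanishing Carleson condition in the form of a Berezin-type transform
  (`tendsto_ber`). Averaging the kernel over small disks transfers this to
  `(1 - |z|²) ^ t ∫ |1 - z w̄| ^ (-(s + t)) dμ(w) → 0` for all `t > 0` (`tendsto_lintegral_kernel`).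
* With `j = 1` and `G(y) = (1 - y) ^ (-2)`, for which `ψ` is just bounded, the multiplied series is
  `(b + 2) log (1 / (1 - z w̄))` up to a bounded function. Its difference from
  `(b + 2) log (2 / (1 - |z|²))` is at most a constant times `(|1 - z w̄| / (1 - |z|²)) ^ (1 / 2)`
  (`log_sub_series_le`), so its contribution is absorbed by the previous estimate with `t = 1 / 2`.

Adding the two parts gives `tendsto_log_mul_integral`, which is the claim.
-/

open MeasureTheory Metric Filter Complex Set
open scoped ENNReal NNReal Topology

/-- The normalized area measure on `ℂ`. -/
noncomputable def dA : Measure ℂ := (ENNReal.ofReal Real.pi)⁻¹ • volume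

/-- The standard weight `ω_a(z) = (1+a)(1-|z|²)^a`. -/
noncomputable def stdW (a : ℝ) (z : ℂ) : ℝ := (1 + a) * (1 - ‖z‖ ^ 2) ^ a

/-- The weighted `L^p` (quasi-)norm over the unit disk. -/
noncomputable def wnorm (p a : ℝ) (f : ℂ → ℂ) : ℝ≥0∞ :=
  (∫⁻ z in ball (0 : ℂ) 1, ENNReal.ofReal (‖f z‖ ^ p * stdW a z) ∂dA) ^ (1 / p)

/-- The pseudohyperbolic disk `D(z,r)`. -/
def pD (z : ℂ) (r : ℝ) : Set ℂ :=
  {w | w ∈ ball (0 : ℂ) 1 ∧ ‖(z - w) / (1 - (starRingEnd ℂ) z * w)‖ < r}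

/-- The Toeplitz operator `T_{μ,b}`. -/
noncomputable def Toep (μ : Measure ℂ) (b : ℝ) (f : ℂ → ℂ) (z : ℂ) : ℂ :=
  ∫ w in ball (0 : ℂ) 1, f w / (1 - z * (starRingEnd ℂ) w) ^ (((2 + b : ℝ)) : ℂ) ∂μ

/-- The Bloch norm. -/
noncomputable def blochNorm (g : ℂ → ℂ) : ℝ :=
  ‖g 0‖ + sSup ((fun z => (1 - ‖z‖ ^ 2) * ‖deriv g z‖) '' ball (0 : ℂ) 1)

/-- Membership in the Bloch space. -/
def MemBloch (g : ℂ → ℂ) : Prop :=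
  DifferentiableOn ℂ g (ball (0 : ℂ) 1) ∧
    BddAbove ((fun z => (1 - ‖z‖ ^ 2) * ‖deriv g z‖) '' ball (0 : ℂ) 1)

/-! ### Forelli–Rudin estimate -/

lemma lintegral_rpow_mul_max_le {a τ δ : ℝ} (ha : -1 < a) (hτ : 0 < τ) (hδ : 0 < δ) :
    ∫⁻ v in Ioi (0 : ℝ), ENNReal.ofReal (v ^ a * (max δ v) ^ (-(1 + a + τ)))
      ≤ ENNReal.ofReal ((1 / (a + 1) + 1 / τ) * δ ^ (-τ)) := by
  have hsplit : Ioi (0 : ℝ) = Ioc 0 δ ∪ Ioi δ := (Ioc_union_Ioi_eq_Ioi hδ.le).symm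
  rw [hsplit]
  refine (lintegral_union_le _ _ _).trans ?_
  rw [add_mul, ENNReal.ofReal_add (by have : 0 < a + 1 := by linarith
                                      positivity) (by positivity)]
  gcongr
  · calc ∫⁻ v in Ioc 0 δ, ENNReal.ofReal (v ^ a * (max δ v) ^ (-(1 + a + τ)))
        = ∫⁻ v in Ioc 0 δ, ENNReal.ofReal (v ^ a * δ ^ (-(1 + a + τ))) := by
          refine setLIntegral_congr_fun measurableSet_Ioc fun v hv => ?_
          simp only [max_eq_left hv.2]
      _ = ENNReal.ofReal (∫ v in Ioc 0 δ, v ^ a * δ ^ (-(1 + a + τ))) := by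
          rw [ofReal_integral_eq_lintegral_ofReal]
          · refine Integrable.mul_const ?_ _
            exact (intervalIntegrable_iff_integrableOn_Ioc_of_le hδ.le).1
              (intervalIntegral.intervalIntegrable_rpow' ha)
          · refine (ae_restrict_mem measurableSet_Ioc).mono fun v hv => ?_
            have := hv.1
            simp only [Pi.zero_apply]
            positivity
      _ ≤ _ := by
          apply ENNReal.ofReal_le_ofReal
          rw [integral_mul_const, ← intervalIntegral.integral_of_le hδ.le,
            integral_rpow (Or.inl ha), Real.zero_rpow (by linarith), sub_zero,
            div_mul_eq_mul_div, ← Real.rpow_add hδ, div_mul_eq_mul_div, one_mul]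
          apply le_of_eq
          congr 2
          ring
  · calc ∫⁻ v in Ioi δ, ENNReal.ofReal (v ^ a * (max δ v) ^ (-(1 + a + τ)))
        = ∫⁻ v in Ioi δ, ENNReal.ofReal (v ^ (-1 - τ)) := by
          refine setLIntegral_congr_fun measurableSet_Ioi fun v hv => ?_
          simp only [max_eq_right (le_of_lt (mem_Ioi.1 hv))]
          rw [← Real.rpow_add (hδ.trans (mem_Ioi.1 hv))]
          congr 2
          ring
      _ = ENNReal.ofReal (∫ v in Ioi δ, v ^ (-1 - τ)) := by
          rw [ofReal_integral_eq_lintegral_ofReal]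
          · exact integrableOn_Ioi_rpow_of_lt (by linarith) hδ
          · refine (ae_restrict_mem measurableSet_Ioi).mono fun v hv => ?_
            have := hδ.trans (mem_Ioi.1 hv)
            simp only [Pi.zero_apply]
            positivity
      _ ≤ _ := by
          apply ENNReal.ofReal_le_ofReal
          rw [integral_Ioi_rpow_of_lt (by linarith) hδ]
          apply le_of_eq
          rw [show -1 - τ + 1 = -τ by ring]
          field_simp

/-- Elementary lower bound for the kernel in polar coordinates. -/
lemma norm_one_sub_polar_ge {x r θ : ℝ} (hx0 : 0 ≤ x) (hx1 : x < 1) (hr0 : 0 < r) (hr1 : r < 1)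
    (hθ : |θ| ≤ Real.pi) :
    max (max (1 - x) (1 - r)) |θ| / 8 ≤ ‖1 - (x : ℂ) * (r * (Real.cos θ + Real.sin θ * I))‖ := by
  set N := ‖1 - (x : ℂ) * (r * (Real.cos θ + Real.sin θ * I))‖ with hN
  have hsq : N ^ 2 = (1 - x * r) ^ 2 + 2 * (x * r) * (1 - Real.cos θ) := by
    rw [hN, Complex.sq_norm, Complex.normSq_apply]
    simp [-Complex.ofReal_cos, -Complex.ofReal_sin]
    have := Real.sin_sq_add_cos_sq θ
    linear_combination (x * r) ^ 2 * this
  have hN0 : 0 ≤ N := norm_nonneg _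
  have hxr0 : 0 ≤ x * r := by positivity
  have hxr1 : x * r ≤ x := by nlinarith
  have hxr2 : x * r ≤ r := by nlinarith
  have hcos := Real.cos_le_one θ
  have h1 : 1 - x * r ≤ N := by
    refine abs_le_of_sq_le_sq' ?_ hN0 |>.2
    rw [hsq]; nlinarith
  have h2 : |θ| / 8 ≤ N := by
    have hpi := Real.pi_lt_four
    rcases le_or_gt (x * r) (1 / 2) with h | h
    · linarith
    · have hc := Real.cos_le_one_sub_mul_cos_sq hθ
      have hp2 : Real.pi ^ 2 ≤ 16 := by nlinarith [Real.pi_pos]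
      have h3 : 1 / 8 ≤ 2 / Real.pi ^ 2 := by
        rw [div_le_div_iff₀ (by norm_num) (by positivity)]; linarith
      have h4 : θ ^ 2 / 8 ≤ 1 - Real.cos θ := by nlinarith [sq_nonneg θ]
      refine abs_le_of_sq_le_sq' ?_ hN0 |>.2
      rw [div_pow, sq_abs, hsq]
      nlinarith [sq_nonneg θ, sq_nonneg (1 - x * r)]
  have : max (max (1 - x) (1 - r)) |θ| ≤ 8 * N := by
    refine max_le (max_le ?_ ?_) ?_ <;> linarith
  linarith

/-- The angular half of the Forelli–Rudin estimate: the symmetric version of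
`lintegral_rpow_mul_max_le` with exponent `a = 0`. -/
lemma lintegral_max_abs_le {τ δ : ℝ} (hτ : 0 < τ) (hδ : 0 < δ) (s : Set ℝ) :
    ∫⁻ θ in s, ENNReal.ofReal ((max δ |θ|) ^ (-(1 + τ)))
      ≤ ENNReal.ofReal (2 * (1 + 1 / τ) * δ ^ (-τ)) := by
  set k : ℝ → ℝ≥0∞ := (Ioi (0 : ℝ)).indicator
    (fun v => ENNReal.ofReal ((max δ v) ^ (-(1 + τ)))) with hk
  have hkm : Measurable k := by
    refine Measurable.indicator ?_ measurableSet_Ioi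
    fun_prop
  have hki : ∫⁻ v, k v ≤ ENNReal.ofReal ((1 + 1 / τ) * δ ^ (-τ)) := by
    rw [hk, lintegral_indicator measurableSet_Ioi]
    have := lintegral_rpow_mul_max_le (a := 0) (by norm_num) hτ hδ
    simpa using this
  calc ∫⁻ θ in s, ENNReal.ofReal ((max δ |θ|) ^ (-(1 + τ)))
      ≤ ∫⁻ θ, ENNReal.ofReal ((max δ |θ|) ^ (-(1 + τ))) := setLIntegral_le_lintegral _ _
    _ ≤ ∫⁻ θ, (k θ + k (-θ)) := by
        refine lintegral_mono_ae ?_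
        filter_upwards [compl_mem_ae_iff.2 (measure_singleton (0 : ℝ))] with θ hθ
        rcases lt_or_gt_of_ne (show θ ≠ 0 from hθ) with h | h
        · refine le_trans (le_of_eq ?_) le_add_self
          simp [hk, h, abs_of_neg h]
        · refine le_trans (le_of_eq ?_) le_self_add
          simp [hk, h, abs_of_pos h]
    _ = 2 * ∫⁻ v, k v := by
        rw [lintegral_add_left hkm, lintegral_neg_eq_self, two_mul]
    _ ≤ 2 * ENNReal.ofReal ((1 + 1 / τ) * δ ^ (-τ)) := by gcongr
    _ = _ := by
        rw [mul_assoc, ENNReal.ofReal_mul (by norm_num : (0 : ℝ) ≤ 2)]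
        simp

lemma exists_rotation (z : ℂ) : ∃ c : Circle, z = ‖z‖ * (c : ℂ) :=
  ⟨Circle.exp z.arg, by rw [Circle.coe_exp, Complex.norm_mul_exp_arg_mul_I]⟩

/-- By rotation invariance of area measure, integrals of the kernel depend on `z` only through `|z|`. -/
lemma setLIntegral_ball_rotate (z : ℂ) (F : ℝ → ℝ → ℝ≥0∞) :
    ∫⁻ u in ball (0 : ℂ) 1, F ‖u‖ ‖1 - z * (starRingEnd ℂ) u‖
      = ∫⁻ u in ball (0 : ℂ) 1, F ‖u‖ ‖1 - (‖z‖ : ℂ) * u‖ := by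
  obtain ⟨c, hc⟩ := exists_rotation z
  have hpre : (rotation c) ⁻¹' (ball (0 : ℂ) 1) = ball (0 : ℂ) 1 := by
    ext u
    rw [mem_preimage, mem_ball_zero_iff, mem_ball_zero_iff, LinearIsometryEquiv.norm_map]
  have := (rotation c).measurePreserving.setLIntegral_comp_preimage_emb
    (rotation c).toHomeomorph.measurableEmbedding
    (fun u => F ‖u‖ ‖1 - z * (starRingEnd ℂ) u‖) (ball (0 : ℂ) 1)
  rw [← this, hpre]
  refine lintegral_congr fun u => ?_
  have h1 : z * (starRingEnd ℂ) (rotation c u) = (starRingEnd ℂ) (‖z‖ * u) := by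
    conv_lhs => rw [hc]
    have h2 : (c : ℂ) * (starRingEnd ℂ) (c : ℂ) = 1 := by
      rw [Complex.mul_conj]; simp
    simp only [rotation_apply, map_mul, Complex.conj_ofReal]
    linear_combination (‖z‖ : ℂ) * (starRingEnd ℂ) u * h2
  have h3 : ‖1 - z * (starRingEnd ℂ) (rotation c u)‖ = ‖1 - (‖z‖ : ℂ) * u‖ := by
    rw [h1, ← Complex.norm_conj (1 - (‖z‖ : ℂ) * u), map_sub, map_one]
  rw [h3, LinearIsometryEquiv.norm_map]

/-- The Forelli–Rudin estimate. -/
lemma forelli_rudin {a t : ℝ} (ha : -1 < a) (ht : 0 < t) :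
    ∃ C : ℝ, 0 ≤ C ∧ ∀ z ∈ ball (0 : ℂ) 1,
      ∫⁻ u in ball (0 : ℂ) 1, ENNReal.ofReal ((1 - ‖u‖ ^ 2) ^ a *
        ‖1 - z * (starRingEnd ℂ) u‖ ^ (-(2 + a + t)))
      ≤ ENNReal.ofReal (C * (1 - ‖z‖ ^ 2) ^ (-t)) := by
  have ha' : 0 < a + 1 := by linarith
  set C₁ : ℝ := 2 ^ |a| * 8 ^ (2 + a + t) with hC₁
  set C₂ : ℝ := C₁ * (1 / (a + 1) + 1 / (t / 2)) * (2 * (1 + 1 / (t / 2))) with hC₂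
  have hC₁0 : 0 ≤ C₁ := by positivity
  have hC₂0 : 0 ≤ C₂ := by positivity
  refine ⟨C₂ * 2 ^ t, by positivity, fun z hz => ?_⟩
  set x : ℝ := ‖z‖ with hx
  have hx0 : 0 ≤ x := norm_nonneg z
  have hx1 : x < 1 := by simpa using hz
  set δ : ℝ := 1 - x with hδ
  have hδ0 : 0 < δ := by linarith
  rw [setLIntegral_ball_rotate z (fun r N => ENNReal.ofReal ((1 - r ^ 2) ^ a * N ^ (-(2 + a + t))))]
  rw [← hx]
  set k : ℝ → ℝ≥0∞ := (Ioi (0 : ℝ)).indicator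
    (fun v => ENNReal.ofReal (v ^ a * (max δ v) ^ (-(1 + a + t / 2)))) with hk
  have hkm : Measurable k := by
    refine Measurable.indicator ?_ measurableSet_Ioi
    fun_prop
  have hki : ∫⁻ v, k v ≤ ENNReal.ofReal ((1 / (a + 1) + 1 / (t / 2)) * δ ^ (-(t / 2))) := by
    rw [hk, lintegral_indicator measurableSet_Ioi]
    exact lintegral_rpow_mul_max_le ha (by linarith) hδ0
  rw [← lintegral_indicator measurableSet_ball, ← Complex.lintegral_comp_polarCoord_symm]
  -- Half of the exponent `t` is spent on the radial variable and half on the angle, which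
  -- bounds the integrand by a product of one-variable functions.
  have hpt : ∀ p ∈ polarCoord.target, ENNReal.ofReal p.1 • (ball (0 : ℂ) 1).indicator
      (fun u => ENNReal.ofReal ((1 - ‖u‖ ^ 2) ^ a * ‖1 - (x : ℂ) * u‖ ^ (-(2 + a + t))))
        (Complex.polarCoord.symm p)
      ≤ (ENNReal.ofReal C₁ * k (1 - p.1)) *
        ENNReal.ofReal ((max δ |p.2|) ^ (-(1 + t / 2))) := by
    rintro ⟨r, θ⟩ hp
    simp only [polarCoord_target, mem_prod, mem_Ioi, mem_Ioo] at hp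
    obtain ⟨hr0, hθ1, hθ2⟩ := hp
    have hnorm : ‖Complex.polarCoord.symm (r, θ)‖ = r := by
      rw [Complex.norm_polarCoord_symm, abs_of_pos hr0]
    by_cases hr1 : r < 1
    · rw [indicator_of_mem (by rw [mem_ball_zero_iff, hnorm]; exact hr1), hnorm]
      have hv0 : 0 < 1 - r := by linarith
      rw [hk, indicator_of_mem (show 1 - r ∈ Ioi (0 : ℝ) from hv0), smul_eq_mul,
        ← ENNReal.ofReal_mul hr0.le, ← ENNReal.ofReal_mul hC₁0, ← ENNReal.ofReal_mul (by positivity)]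
      apply ENNReal.ofReal_le_ofReal
      have hlow := norm_one_sub_polar_ge hx0 hx1 hr0 hr1 (abs_le.2 ⟨hθ1.le, hθ2.le⟩)
      rw [← Complex.polarCoord_symm_apply (r, θ)] at hlow
      set N := ‖1 - (x : ℂ) * Complex.polarCoord.symm (r, θ)‖
      set m₁ := max δ (1 - r) with hm₁
      set m₂ := max δ |θ| with hm₂
      have hm₁0 : 0 < m₁ := lt_of_lt_of_le hδ0 (le_max_left _ _)
      have hm₂0 : 0 < m₂ := lt_of_lt_of_le hδ0 (le_max_left _ _)
      have hN1 : m₁ / 8 ≤ N := le_trans (by gcongr; exact le_max_left _ _) hlow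
      have hN2 : m₂ / 8 ≤ N := by
        refine le_trans ?_ hlow
        gcongr
        exact max_le_max (le_max_left _ _) le_rfl
      have hN0 : 0 < N := by linarith
      have e1 : N ^ (-(1 + a + t / 2)) ≤ (m₁ / 8) ^ (-(1 + a + t / 2)) :=
        Real.rpow_le_rpow_of_nonpos (by positivity) hN1 (by linarith)
      have e2 : N ^ (-(1 + t / 2)) ≤ (m₂ / 8) ^ (-(1 + t / 2)) :=
        Real.rpow_le_rpow_of_nonpos (by positivity) hN2 (by linarith)
      have e3 : N ^ (-(2 + a + t)) = N ^ (-(1 + a + t / 2)) * N ^ (-(1 + t / 2)) := by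
        rw [← Real.rpow_add hN0]; congr 1; ring
      have e4 : (1 - r ^ 2) ^ a ≤ 2 ^ |a| * (1 - r) ^ a := by
        rw [show 1 - r ^ 2 = (1 + r) * (1 - r) by ring, Real.mul_rpow (by linarith) hv0.le]
        gcongr
        calc (1 + r) ^ a ≤ (1 + r) ^ |a| :=
              Real.rpow_le_rpow_of_exponent_le (by linarith) (le_abs_self a)
          _ ≤ 2 ^ |a| := Real.rpow_le_rpow (by linarith) (by linarith) (abs_nonneg a)
      have e5 : (8 : ℝ) ^ (2 + a + t) = 8 ^ (1 + a + t / 2) * 8 ^ (1 + t / 2) := by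
        rw [← Real.rpow_add (by norm_num)]; congr 1; ring
      have e6 : (m₁ / 8) ^ (-(1 + a + t / 2)) = 8 ^ (1 + a + t / 2) * m₁ ^ (-(1 + a + t / 2)) := by
        rw [Real.div_rpow hm₁0.le (by norm_num), Real.rpow_neg (by norm_num : (0 : ℝ) ≤ 8),
          div_inv_eq_mul, mul_comm]
      have e7 : (m₂ / 8) ^ (-(1 + t / 2)) = 8 ^ (1 + t / 2) * m₂ ^ (-(1 + t / 2)) := by
        rw [Real.div_rpow hm₂0.le (by norm_num), Real.rpow_neg (by norm_num : (0 : ℝ) ≤ 8),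
          div_inv_eq_mul, mul_comm]
      have hr2 : 0 < 1 - r ^ 2 := by nlinarith
      calc r * ((1 - r ^ 2) ^ a * N ^ (-(2 + a + t)))
          ≤ 1 * ((2 ^ |a| * (1 - r) ^ a) *
              ((m₁ / 8) ^ (-(1 + a + t / 2)) * (m₂ / 8) ^ (-(1 + t / 2)))) := by
            rw [e3]; gcongr
        _ = _ := by rw [e6, e7, hC₁, e5]; ring
    · rw [indicator_of_notMem (by rw [mem_ball_zero_iff, hnorm]; exact hr1)]
      simp
  calc _ ≤ ∫⁻ p in polarCoord.target, (ENNReal.ofReal C₁ * k (1 - p.1)) *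
        ENNReal.ofReal ((max δ |p.2|) ^ (-(1 + t / 2))) :=
        setLIntegral_mono' polarCoord.open_target.measurableSet hpt
    _ = (∫⁻ r in Ioi (0 : ℝ), ENNReal.ofReal C₁ * k (1 - r)) *
        ∫⁻ θ in Ioo (-Real.pi) Real.pi, ENNReal.ofReal ((max δ |θ|) ^ (-(1 + t / 2))) := by
        rw [polarCoord_target, Measure.volume_eq_prod, ← Measure.prod_restrict]
        refine lintegral_prod_mul (f := fun r => ENNReal.ofReal C₁ * k (1 - r))
          (g := fun θ => ENNReal.ofReal ((max δ |θ|) ^ (-(1 + t / 2)))) ?_ ?_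
        · exact ((hkm.comp (measurable_const.sub measurable_id)).const_mul _).aemeasurable
        · fun_prop
    _ ≤ (ENNReal.ofReal C₁ * ENNReal.ofReal ((1 / (a + 1) + 1 / (t / 2)) * δ ^ (-(t / 2)))) *
        ENNReal.ofReal (2 * (1 + 1 / (t / 2)) * δ ^ (-(t / 2))) := by
        gcongr
        · refine (setLIntegral_le_lintegral _ _).trans ?_
          rw [lintegral_const_mul _ (show Measurable fun r : ℝ => k (1 - r) from
            hkm.comp (measurable_const.sub measurable_id)), lintegral_sub_left_eq_self k 1]
          gcongr
        · exact lintegral_max_abs_le (by linarith) hδ0 _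
    _ = ENNReal.ofReal (C₂ * δ ^ (-t)) := by
        rw [← ENNReal.ofReal_mul hC₁0, ← ENNReal.ofReal_mul (by positivity)]
        congr 1
        rw [show -t = -(t / 2) + -(t / 2) by ring, Real.rpow_add hδ0, hC₂]
        ring
    _ ≤ _ := by
        apply ENNReal.ofReal_le_ofReal
        rw [mul_assoc C₂ (2 ^ t)]
        refine mul_le_mul_of_nonneg_left ?_ hC₂0
        rw [show 1 - x ^ 2 = (1 + x) * δ by rw [hδ]; ring, Real.mul_rpow (by linarith) hδ0.le,
          ← mul_assoc]
        refine le_mul_of_one_le_left (by positivity) ?_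
        rw [Real.rpow_neg (by linarith), ← div_eq_mul_inv, one_le_div (by positivity)]
        exact Real.rpow_le_rpow (by linarith) (by linarith) ht.le

/-! ### Binomial series and moments of radial weights -/

/-- The coefficient of `x ^ n` in `(1 - x) ^ (-c)`. -/
noncomputable def pc (c : ℝ) (n : ℕ) : ℝ := ∏ j ∈ Finset.range n, (c + j) / (j + 1)

lemma pc_zero (c : ℝ) : pc c 0 = 1 := by simp [pc]

lemma pc_succ (c : ℝ) (n : ℕ) : pc c (n + 1) = pc c n * ((c + n) / (n + 1)) := by
  rw [pc, Finset.prod_range_succ, ← pc]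

lemma multichoose_eq_pc (c : ℝ) (n : ℕ) : Ring.multichoose (c : ℂ) n = pc c n := by
  have h1 := Ring.factorial_nsmul_multichoose_eq_ascPochhammer (c : ℂ) n
  rw [Polynomial.ascPochhammer_smeval_eq_eval] at h1
  have h2 : (ascPochhammer ℂ n).eval (c : ℂ) = (n.factorial : ℂ) * pc c n := by
    clear h1
    induction n with
    | zero => simp [pc_zero]
    | succ k ih =>
      have : (k : ℂ) + 1 ≠ 0 := by exact_mod_cast Nat.succ_ne_zero k
      rw [ascPochhammer_succ_eval, ih, pc_succ, Nat.factorial_succ]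
      push_cast
      field_simp
  rw [h2, nsmul_eq_mul] at h1
  exact mul_left_cancel₀ (by exact_mod_cast Nat.factorial_ne_zero n) h1

lemma hasSum_pc (c : ℝ) {x : ℂ} (hx : ‖x‖ < 1) :
    HasSum (fun n => (pc c n : ℂ) * x ^ n) (1 / (1 - x) ^ (c : ℂ)) := by
  have h := (Complex.one_div_one_sub_cpow_hasFPowerSeriesOnBall_zero (c : ℂ)).hasSum (y := x)
    (by rw [Metric.mem_eball, edist_zero_right]; simpa [enorm_eq_nnnorm, ← NNReal.coe_lt_coe] using hx)
  simp only [FormalMultilinearSeries.ofScalars_apply_eq, zero_add, ← Ring.multichoose_eq,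
    multichoose_eq_pc, smul_eq_mul] at h
  exact h

lemma integral_pow_mul_one_sub_rpow {γ : ℝ} (hγ : 0 ≤ γ) (n : ℕ) :
    ∫ v in Ioo (0 : ℝ) 1, ((v ^ n * (1 - v) ^ γ : ℝ) : ℂ)
      = n.factorial / ∏ j ∈ Finset.range (n + 1), ((γ : ℂ) + 1 + j) := by
  have hre : 0 < ((γ : ℂ) + 1).re := by simp; linarith
  rw [← betaIntegral_eval_nat_add_one_right hre n, ← betaIntegral_symm, betaIntegral,
    intervalIntegral.integral_of_le zero_le_one, integral_Ioc_eq_integral_Ioo]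
  refine setIntegral_congr_fun measurableSet_Ioo fun v hv => ?_
  have h1 : (0 : ℝ) ≤ 1 - v := by linarith [hv.2]
  simp only [add_sub_cancel_right, cpow_natCast]
  push_cast [Complex.ofReal_cpow h1]
  rfl

lemma integral_exp_diff (n m : ℕ) :
    ∫ θ in Ioo (-Real.pi) Real.pi, cexp (((m : ℂ) - n) * I * θ)
      = if n = m then (2 * Real.pi : ℂ) else 0 := by
  have hpi : -Real.pi ≤ Real.pi := by linarith [Real.pi_pos]
  split_ifs with h
  · subst h
    simp
    rw [max_eq_left (by linarith [Real.pi_pos])]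
    push_cast; ring
  · have hmn : (m : ℂ) ≠ n := by exact_mod_cast Ne.symm h
    have hc : ((m : ℂ) - n) * I ≠ 0 := mul_ne_zero (sub_ne_zero.2 hmn) I_ne_zero
    rw [← integral_Ioc_eq_integral_Ioo, ← intervalIntegral.integral_of_le hpi,
      integral_exp_mul_complex hc]
    have : cexp (((m : ℂ) - n) * I * (Real.pi : ℝ)) = cexp (((m : ℂ) - n) * I * ((-Real.pi : ℝ))) := by
      rw [Complex.exp_eq_exp_iff_exists_int]
      refine ⟨(m : ℤ) - n, ?_⟩
      push_cast; ring
    rw [this, sub_self, zero_div]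

/-- Orthogonality of monomials for a standard radial weight on the disk. -/
lemma integral_monomials {γ : ℝ} (hγ : 0 ≤ γ) (n m : ℕ) :
    ∫ u in ball (0 : ℂ) 1, (starRingEnd ℂ) u ^ n * u ^ m * (((1 - ‖u‖ ^ 2) ^ γ : ℝ) : ℂ)
      = if n = m then
          (Real.pi : ℂ) * (n.factorial / ∏ j ∈ Finset.range (n + 1), ((γ : ℂ) + 1 + j)) else 0 := by
  rw [← integral_indicator measurableSet_ball, ← Complex.integral_comp_polarCoord_symm]
  set f : ℝ → ℂ := fun r => (Iio (1 : ℝ)).indicator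
    (fun r => ((r * (r ^ (n + m) * (1 - r ^ 2) ^ γ) : ℝ) : ℂ)) r with hf
  have hpt : ∀ p ∈ polarCoord.target, p.1 • (ball (0 : ℂ) 1).indicator
      (fun u => (starRingEnd ℂ) u ^ n * u ^ m * (((1 - ‖u‖ ^ 2) ^ γ : ℝ) : ℂ))
        (Complex.polarCoord.symm p) = f p.1 * cexp (((m : ℂ) - n) * I * p.2) := by
    rintro ⟨r, θ⟩ hp
    simp only [polarCoord_target, mem_prod, mem_Ioi, mem_Ioo] at hp
    obtain ⟨hr0, -⟩ := hp
    have hnorm : ‖Complex.polarCoord.symm (r, θ)‖ = r := by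
      rw [Complex.norm_polarCoord_symm, abs_of_pos hr0]
    by_cases hr1 : r < 1
    · rw [indicator_of_mem (by rw [mem_ball_zero_iff, hnorm]; exact hr1), hnorm]
      simp only [hf]
      rw [indicator_of_mem (mem_Iio.2 hr1)]
      have he : Complex.polarCoord.symm (r, θ) = r * cexp (θ * I) := by
        rw [Complex.polarCoord_symm_apply, Complex.exp_mul_I]; push_cast; rfl
      have hce : (starRingEnd ℂ) (cexp (θ * I)) = cexp (-(θ * I)) := by
        rw [← Complex.exp_conj]; simp
      rw [he, map_mul, Complex.conj_ofReal, hce, mul_pow, mul_pow, ← Complex.exp_nat_mul,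
        ← Complex.exp_nat_mul, show ((m : ℂ) - n) * I * θ = n * -(θ * I) + m * (θ * I) by ring,
        Complex.exp_add, Complex.real_smul]
      push_cast
      ring
    · rw [indicator_of_notMem (by rw [mem_ball_zero_iff, hnorm]; exact hr1)]
      simp [hf, hr1]
  rw [setIntegral_congr_fun polarCoord.open_target.measurableSet hpt, polarCoord_target,
    Measure.volume_eq_prod, ← Measure.prod_restrict,
    integral_prod_mul f (fun θ : ℝ => cexp (((m : ℂ) - n) * I * θ)), integral_exp_diff]
  split_ifs with h
  · subst h
    rw [← integral_pow_mul_one_sub_rpow hγ n]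
    have hg := integral_comp_rpow_Ioi_of_pos (p := 2) two_pos (g := (Iio (1 : ℝ)).indicator
      (fun v => ((v ^ n * (1 - v) ^ γ : ℝ) : ℂ)))
    rw [setIntegral_indicator measurableSet_Iio, Ioi_inter_Iio] at hg
    rw [← hg, show ∀ X : ℂ, X * (2 * Real.pi) = Real.pi * (2 * X) by intro X; ring,
      ← integral_const_mul]
    congr 1
    refine setIntegral_congr_fun measurableSet_Ioi fun r hr => ?_
    have hr0 : (0 : ℝ) < r := hr
    have e1 : r ^ (2 : ℝ) = r ^ 2 := by norm_cast
    simp only [hf, e1]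
    by_cases hr1 : r < 1
    · rw [indicator_of_mem (mem_Iio.2 hr1), indicator_of_mem (mem_Iio.2 (by nlinarith)),
        Complex.real_smul, show (2 : ℝ) - 1 = 1 by norm_num, Real.rpow_one]
      push_cast
      ring
    · rw [indicator_of_notMem (by simpa using hr1), indicator_of_notMem (by
        rw [mem_Iio]; nlinarith)]
      simp
  · simp

lemma norm_conj_pow_mul_le {γ : ℝ} (hγ : 0 ≤ γ) (n m : ℕ) {u : ℂ} (hu : u ∈ ball (0 : ℂ) 1) :
    ‖(starRingEnd ℂ) u ^ n * u ^ m * (((1 - ‖u‖ ^ 2) ^ γ : ℝ) : ℂ)‖ ≤ 1 := by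
  rw [mem_ball_zero_iff] at hu
  have h0 := norm_nonneg u
  have h1 : 0 ≤ 1 - ‖u‖ ^ 2 := by nlinarith
  rw [norm_mul, norm_mul, norm_pow, norm_pow, Complex.norm_conj, Complex.norm_real, Real.norm_eq_abs,
    abs_of_nonneg (Real.rpow_nonneg h1 _)]
  have a1 := pow_le_one₀ (n := n) h0 hu.le
  have a2 := pow_le_one₀ (n := m) h0 hu.le
  have a3 : (1 - ‖u‖ ^ 2) ^ γ ≤ 1 := Real.rpow_le_one h1 (by nlinarith) hγ
  exact mul_le_one₀ (mul_le_one₀ a1 (by positivity) a2) (Real.rpow_nonneg h1 _) a3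

lemma measurable_conj_pow {γ : ℝ} (n m : ℕ) : Measurable
    (fun u : ℂ => (starRingEnd ℂ) u ^ n * u ^ m * (((1 - ‖u‖ ^ 2) ^ γ : ℝ) : ℂ)) := by
  have : Measurable (starRingEnd ℂ) := Complex.continuous_conj.measurable
  fun_prop

/-- Termwise integration of a product of an antiholomorphic and a holomorphic power series. -/
lemma integral_series_mul {γ : ℝ} (hγ : 0 ≤ γ) {a b : ℕ → ℂ}
    (ha : Summable fun n => ‖a n‖) (hb : Summable fun n => ‖b n‖) :
    ∫ u in ball (0 : ℂ) 1, (∑' n, a n * (starRingEnd ℂ) u ^ n) * (∑' m, b m * u ^ m) *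
        (((1 - ‖u‖ ^ 2) ^ γ : ℝ) : ℂ)
      = ∑' n, a n * b n * ((Real.pi : ℂ) *
          (n.factorial / ∏ j ∈ Finset.range (n + 1), ((γ : ℂ) + 1 + j))) := by
  set F : ℕ × ℕ → ℂ → ℂ := fun q u => (a q.1 * b q.2) *
    ((starRingEnd ℂ) u ^ q.1 * u ^ q.2 * (((1 - ‖u‖ ^ 2) ^ γ : ℝ) : ℂ)) with hF
  have hab : Summable fun q : ℕ × ℕ => ‖a q.1 * b q.2‖ := by
    simp only [norm_mul]
    exact ha.mul_of_nonneg hb (fun _ => norm_nonneg _) (fun _ => norm_nonneg _)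
  have : IsFiniteMeasure ((volume : Measure ℂ).restrict (ball (0 : ℂ) 1)) :=
    ⟨by rw [Measure.restrict_apply_univ]; exact measure_ball_lt_top⟩
  have hint1 : ∀ q : ℕ × ℕ, Integrable (fun u : ℂ => (starRingEnd ℂ) u ^ q.1 * u ^ q.2 *
      (((1 - ‖u‖ ^ 2) ^ γ : ℝ) : ℂ)) (volume.restrict (ball (0 : ℂ) 1)) := fun q =>
    Integrable.of_bound (measurable_conj_pow q.1 q.2).aestronglyMeasurable 1
      ((ae_restrict_mem measurableSet_ball).mono fun u hu => norm_conj_pow_mul_le hγ q.1 q.2 hu)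
  have hint : ∀ q, Integrable (F q) (volume.restrict (ball (0 : ℂ) 1)) := fun q =>
    (hint1 q).const_mul _
  have hbd : ∀ q, ∫ u in ball (0 : ℂ) 1, ‖F q u‖ ≤
      ‖a q.1 * b q.2‖ * (volume.restrict (ball (0 : ℂ) 1)).real univ := by
    intro q
    simp only [hF, norm_mul (a q.1 * b q.2)]
    rw [integral_const_mul]
    gcongr
    refine (integral_mono_ae (hint1 q).norm (integrable_const 1)
      ((ae_restrict_mem measurableSet_ball).mono fun u hu =>
        norm_conj_pow_mul_le hγ q.1 q.2 hu)).trans ?_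
    simp
  have hsum : Summable fun q => ∫ u in ball (0 : ℂ) 1, ‖F q u‖ :=
    Summable.of_nonneg_of_le (fun q => integral_nonneg fun u => norm_nonneg _) hbd
      (hab.mul_right _)
  have key := hasSum_integral_of_summable_integral_norm hint hsum
  have hval : ∀ q : ℕ × ℕ, ∫ u in ball (0 : ℂ) 1, F q u = if q.1 = q.2 then a q.1 * b q.2 *
      ((Real.pi : ℂ) * (q.1.factorial / ∏ j ∈ Finset.range (q.1 + 1), ((γ : ℂ) + 1 + j))) else 0 := by
    intro q
    simp only [hF]
    rw [integral_const_mul, integral_monomials hγ]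
    split_ifs <;> simp
  have hlhs : ∫ u in ball (0 : ℂ) 1, (∑' n, a n * (starRingEnd ℂ) u ^ n) * (∑' m, b m * u ^ m) *
        (((1 - ‖u‖ ^ 2) ^ γ : ℝ) : ℂ) = ∫ u in ball (0 : ℂ) 1, ∑' q, F q u := by
    refine setIntegral_congr_fun measurableSet_ball fun u hu => ?_
    rw [mem_ball_zero_iff] at hu
    have s1 : Summable fun n => ‖a n * (starRingEnd ℂ) u ^ n‖ := by
      refine Summable.of_nonneg_of_le (fun _ => norm_nonneg _) (fun n => ?_) ha
      rw [norm_mul, norm_pow, Complex.norm_conj]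
      exact mul_le_of_le_one_right (norm_nonneg _) (pow_le_one₀ (norm_nonneg _) hu.le)
    have s2 : Summable fun n => ‖b n * u ^ n‖ := by
      refine Summable.of_nonneg_of_le (fun _ => norm_nonneg _) (fun n => ?_) hb
      rw [norm_mul, norm_pow]
      exact mul_le_of_le_one_right (norm_nonneg _) (pow_le_one₀ (norm_nonneg _) hu.le)
    rw [tsum_mul_tsum_of_summable_norm s1 s2, ← tsum_mul_right]
    refine tsum_congr fun q => ?_
    simp only [hF]
    ring
  rw [hlhs, ← key.tsum_eq, key.summable.tsum_prod]
  refine tsum_congr fun n => ?_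
  rw [tsum_eq_single n]
  · rw [hval]; simp
  · intro m hm
    rw [hval]
    simp [hm.symm]

/-- The `n`-th Taylor coefficient of the kernel `(1 - x) ^ (-(2 + b))` times the `n`-th moment of the
weight `(1 - |u|²) ^ (b + 2)`. By telescoping of the Gamma quotients it is a rational function
of `n`. -/
lemma pc_mul_moment {b : ℝ} (hb : -1 < b) (n : ℕ) :
    (pc (2 + b) n : ℂ) * (n.factorial / ∏ j ∈ Finset.range (n + 1), (((b + 2 : ℝ) : ℂ) + 1 + j))
      = (((b + 2) / ((n + b + 2) * (n + b + 3)) : ℝ) : ℂ) := by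
  have h : pc (2 + b) n * (n.factorial / ∏ j ∈ Finset.range (n + 1), ((b + 2) + 1 + (j : ℝ)))
      = (b + 2) / ((n + b + 2) * (n + b + 3)) := by
    induction n with
    | zero =>
      have h1 : b + 2 ≠ 0 := by linarith
      have h2 : b + 3 ≠ 0 := by linarith
      have h3 : b + 2 + 1 ≠ 0 := by linarith
      simp [pc_zero]
      field_simp
      ring
    | succ k ih =>
      have hk : (0 : ℝ) ≤ k := Nat.cast_nonneg k
      rw [pc_succ, Finset.prod_range_succ, Nat.factorial_succ]
      set P := ∏ j ∈ Finset.range (k + 1), ((b + 2) + 1 + (j : ℝ)) with hP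
      have hP0 : 0 < P := Finset.prod_pos fun j _ => by
        have : (0 : ℝ) ≤ j := Nat.cast_nonneg j
        linarith
      have h1 : (k : ℝ) + b + 2 ≠ 0 := by linarith
      have h2 : (k : ℝ) + b + 3 ≠ 0 := by linarith
      have h3 : (k : ℝ) + 1 ≠ 0 := by linarith
      have h4 : (b + 2) + 1 + ((k : ℝ) + 1) ≠ 0 := by linarith
      have h5 : (k : ℝ) + 1 + b + 2 ≠ 0 := by linarith
      have h6 : (k : ℝ) + 1 + b + 3 ≠ 0 := by linarith
      have : pc (2 + b) k * ((2 + b + k) / (k + 1)) *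
          (((k + 1 : ℕ) * k.factorial : ℕ) / (P * ((b + 2) + 1 + ((k + 1 : ℕ) : ℝ)))) =
          (pc (2 + b) k * (k.factorial / P)) * ((2 + b + k) / ((b + 2) + 1 + ((k : ℝ) + 1))) := by
        push_cast
        field_simp
      rw [this, ih]
      push_cast
      field_simp
      ring
  rw [← h]
  push_cast
  rfl

/-! ### Pairing with the Toeplitz operator -/

lemma one_sub_norm_sq_pos {u : ℂ} (hu : u ∈ ball (0 : ℂ) 1) : 0 < 1 - ‖u‖ ^ 2 := by
  rw [mem_ball_zero_iff] at hu
  have := norm_nonneg u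
  nlinarith

lemma norm_mul_conj_lt {z w : ℂ} (hz : z ∈ ball (0 : ℂ) 1) (hw : w ∈ ball (0 : ℂ) 1) :
    ‖z * (starRingEnd ℂ) w‖ < 1 := by
  rw [mem_ball_zero_iff] at hz hw
  rw [norm_mul, Complex.norm_conj]
  have := norm_nonneg z
  have := norm_nonneg w
  nlinarith

lemma one_sub_mem_slitPlane {x : ℂ} (hx : ‖x‖ < 1) : 1 - x ∈ slitPlane := by
  rw [sub_eq_add_neg]
  exact Complex.mem_slitPlane_of_norm_lt_one (by rwa [norm_neg])

lemma one_sub_ne_zero_of_norm {x : ℂ} (hx : ‖x‖ < 1) : 1 - x ≠ 0 :=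
  Complex.slitPlane_ne_zero (one_sub_mem_slitPlane hx)

lemma half_le_norm_one_sub {z w : ℂ} (hz : z ∈ ball (0 : ℂ) 1) (hw : w ∈ ball (0 : ℂ) 1) :
    (1 - ‖z‖ ^ 2) / 2 ≤ ‖1 - z * (starRingEnd ℂ) w‖ := by
  have h1 : ‖(1 : ℂ)‖ - ‖z * (starRingEnd ℂ) w‖ ≤ ‖1 - z * (starRingEnd ℂ) w‖ := norm_sub_norm_le _ _
  rw [mem_ball_zero_iff] at hz hw
  rw [norm_one, norm_mul, Complex.norm_conj] at h1
  have := norm_nonneg z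
  have := norm_nonneg w
  nlinarith

lemma norm_one_sub_pos {z w : ℂ} (hz : z ∈ ball (0 : ℂ) 1) (hw : w ∈ ball (0 : ℂ) 1) :
    0 < ‖1 - z * (starRingEnd ℂ) w‖ :=
  norm_pos_iff.2 (one_sub_ne_zero_of_norm (norm_mul_conj_lt hz hw))

/-- Duality: integrating `f` against the weighted transform of `ψ` is controlled by the
`L¹` norm of the Toeplitz operator, because of Fubini's theorem. -/
lemma norm_pairing_le {b M C F : ℝ} (hb : -1 < b) {μ : Measure ℂ} [IsFiniteMeasure μ] {ψ f : ℂ → ℂ}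
    (hψc : ContinuousOn ψ (ball 0 1)) (hfc : ContinuousOn f (ball 0 1))
    (hM : ∀ u ∈ ball (0 : ℂ) 1, ‖ψ u‖ ≤ M) (hC : ∀ u ∈ ball (0 : ℂ) 1, ‖ψ u‖ ≤ C * (1 - ‖u‖ ^ 2) ^ 2)
    (hF : ∀ u ∈ ball (0 : ℂ) 1, ‖f u‖ ≤ F) :
    ‖∫ w in ball (0 : ℂ) 1, f w * (∫ u in ball (0 : ℂ) 1, ψ u * (((1 - ‖u‖ ^ 2) ^ b : ℝ) : ℂ) *
        (1 / (1 - u * (starRingEnd ℂ) w) ^ ((2 + b : ℝ) : ℂ))) ∂μ‖ₑ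
      ≤ ENNReal.ofReal (Real.pi * M / (1 + b)) * wnorm 1 b (Toep μ b f) := by
  have hb1 : 0 < 1 + b := by linarith
  have hM0 : 0 ≤ M := (norm_nonneg _).trans (hM 0 (by simp))
  have hC0 : 0 ≤ C := by simpa using (norm_nonneg _).trans (hC 0 (by simp))
  have hF0 : 0 ≤ F := (norm_nonneg _).trans (hF 0 (by simp))
  have : IsFiniteMeasure ((volume : Measure ℂ).restrict (ball (0 : ℂ) 1)) :=
    ⟨by rw [Measure.restrict_apply_univ]; exact measure_ball_lt_top⟩
  set H : ℂ → ℂ → ℂ := fun w u => f w * (ψ u * (((1 - ‖u‖ ^ 2) ^ b : ℝ) : ℂ) *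
        (1 / (1 - u * (starRingEnd ℂ) w) ^ ((2 + b : ℝ) : ℂ))) with hH
  have hint : Integrable (Function.uncurry H)
      ((μ.restrict (ball 0 1)).prod (volume.restrict (ball (0 : ℂ) 1))) := by
    refine Integrable.of_bound (C := F * (C * 2 ^ (2 + b))) ?_ ?_
    · rw [Measure.prod_restrict]
      refine ContinuousOn.aestronglyMeasurable ?_ (measurableSet_ball.prod measurableSet_ball)
      have c1 : ContinuousOn (fun q : ℂ × ℂ => f q.1) (ball 0 1 ×ˢ ball 0 1) :=
        hfc.comp continuousOn_fst fun q hq => hq.1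
      have c2 : ContinuousOn (fun q : ℂ × ℂ => ψ q.2) (ball 0 1 ×ˢ ball 0 1) :=
        hψc.comp continuousOn_snd fun q hq => hq.2
      have c3 : ContinuousOn (fun q : ℂ × ℂ => (((1 - ‖q.2‖ ^ 2) ^ b : ℝ) : ℂ))
          (ball 0 1 ×ˢ ball 0 1) := by
        refine Complex.continuous_ofReal.comp_continuousOn ?_
        refine ContinuousOn.rpow_const (by fun_prop) fun q hq => Or.inl ?_
        exact (one_sub_norm_sq_pos hq.2).ne'
      have c4 : ContinuousOn (fun q : ℂ × ℂ =>
          1 / (1 - q.2 * (starRingEnd ℂ) q.1) ^ ((2 + b : ℝ) : ℂ)) (ball 0 1 ×ˢ ball 0 1) := by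
        refine ContinuousOn.div continuousOn_const ?_ ?_
        · refine ContinuousOn.cpow ?_ continuousOn_const fun q hq =>
            one_sub_mem_slitPlane (norm_mul_conj_lt hq.2 hq.1)
          have := Complex.continuous_conj
          fun_prop
        · intro q hq
          exact (Complex.cpow_ne_zero_iff_of_exponent_ne_zero
            (by exact_mod_cast (by linarith : 2 + b ≠ 0))).2
            (one_sub_ne_zero_of_norm (norm_mul_conj_lt hq.2 hq.1))
      exact c1.mul ((c2.mul c3).mul c4)
    · rw [Measure.prod_restrict]
      refine (ae_restrict_mem (measurableSet_ball.prod measurableSet_ball)).mono ?_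
      rintro ⟨w, u⟩ ⟨hw, hu⟩
      simp only [Function.uncurry, hH]
      have hpos := one_sub_norm_sq_pos hu
      have hn := norm_one_sub_pos hu hw
      rw [norm_mul, norm_mul, norm_mul, norm_div, norm_one, Complex.norm_cpow_real, Complex.norm_real,
        Real.norm_eq_abs, abs_of_nonneg (Real.rpow_nonneg hpos.le _)]
      refine mul_le_mul (hF w hw) ?_ (by positivity) hF0
      have h1 : (1 - ‖u‖ ^ 2) ^ (2 + b) ≤ 2 ^ (2 + b) * ‖1 - u * (starRingEnd ℂ) w‖ ^ (2 + b) := by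
        rw [← Real.mul_rpow zero_le_two hn.le]
        refine Real.rpow_le_rpow hpos.le ?_ (by linarith)
        linarith [half_le_norm_one_sub hu hw]
      have h2 : (1 - ‖u‖ ^ 2) ^ (2 + b) = (1 - ‖u‖ ^ 2) ^ 2 * (1 - ‖u‖ ^ 2) ^ b := by
        rw [Real.rpow_add hpos]; norm_cast
      rw [mul_one_div, div_le_iff₀ (Real.rpow_pos_of_pos hn _)]
      calc ‖ψ u‖ * (1 - ‖u‖ ^ 2) ^ b ≤ C * (1 - ‖u‖ ^ 2) ^ 2 * (1 - ‖u‖ ^ 2) ^ b := by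
            gcongr; exact hC u hu
        _ = C * (1 - ‖u‖ ^ 2) ^ (2 + b) := by rw [h2]; ring
        _ ≤ C * (2 ^ (2 + b) * ‖1 - u * (starRingEnd ℂ) w‖ ^ (2 + b)) := by gcongr
        _ = _ := by ring
  have e1 : ∫ w in ball (0 : ℂ) 1, f w * (∫ u in ball (0 : ℂ) 1, ψ u * (((1 - ‖u‖ ^ 2) ^ b : ℝ) : ℂ) *
        (1 / (1 - u * (starRingEnd ℂ) w) ^ ((2 + b : ℝ) : ℂ))) ∂μ
      = ∫ u in ball (0 : ℂ) 1, (ψ u * (((1 - ‖u‖ ^ 2) ^ b : ℝ) : ℂ)) * Toep μ b f u := by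
    have : ∀ w, f w * (∫ u in ball (0 : ℂ) 1, ψ u * (((1 - ‖u‖ ^ 2) ^ b : ℝ) : ℂ) *
        (1 / (1 - u * (starRingEnd ℂ) w) ^ ((2 + b : ℝ) : ℂ))) = ∫ u in ball (0 : ℂ) 1, H w u :=
      fun w => by rw [← integral_const_mul]
    simp_rw [this]
    rw [integral_integral_swap hint]
    congr 1
    funext u
    rw [Toep, ← integral_const_mul]
    congr 1
    funext w
    simp only [hH]
    ring
  rw [e1]
  refine (enorm_integral_le_lintegral_enorm _).trans ?_
  rw [wnorm, div_one, ENNReal.rpow_one, dA, Measure.restrict_smul, lintegral_smul_measure, smul_eq_mul,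
    ← mul_assoc, ← ENNReal.ofReal_inv_of_pos Real.pi_pos, ← ENNReal.ofReal_mul (by positivity),
    ← lintegral_const_mul' _ _ ENNReal.ofReal_ne_top]
  refine setLIntegral_mono_ae' measurableSet_ball (Eventually.of_forall fun u hu => ?_)
  have hpos := one_sub_norm_sq_pos hu
  rw [← ENNReal.ofReal_mul (by positivity), ← ofReal_norm]
  refine ENNReal.ofReal_le_ofReal ?_
  rw [Real.rpow_one, stdW, norm_mul, norm_mul, Complex.norm_real,
        Real.norm_eq_abs, abs_of_nonneg (Real.rpow_nonneg hpos.le _)]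
  have hW := Real.rpow_nonneg hpos.le b
  have : Real.pi * M / (1 + b) * Real.pi⁻¹ * (‖Toep μ b f u‖ * ((1 + b) * (1 - ‖u‖ ^ 2) ^ b))
      = M * (1 - ‖u‖ ^ 2) ^ b * ‖Toep μ b f u‖ := by
    have := Real.pi_pos
    field_simp
  rw [this]
  gcongr
  exact hM u hu

/-- The moment multipliers appearing when a power series is paired with the kernel. -/
noncomputable def dm (b : ℝ) (n : ℕ) : ℝ := (b + 2) / ((n + b + 2) * (n + b + 3))

/-- For `ψ(u) = (1 - |u|²)² G(z ū)` the weighted transform in `norm_pairing_le` is again a power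
series in `z w̄`, with the coefficients of `G` multiplied by `dm b`. The factor `(1 - |u|²)²` makes
the double integral absolutely convergent and produces the decay `n⁻²` of the multipliers. -/
lemma pairing_kernel {b : ℝ} (hb : -1 < b) {α : ℕ → ℂ} {G : ℂ → ℂ}
    (hG : ∀ y : ℂ, ‖y‖ < 1 → HasSum (fun n => α n * y ^ n) (G y)) {z w : ℂ}
    (hz : z ∈ ball (0 : ℂ) 1) (hw : w ∈ ball (0 : ℂ) 1) :
    ∫ u in ball (0 : ℂ) 1, ((((1 - ‖u‖ ^ 2) ^ 2 : ℝ) : ℂ) * G (z * (starRingEnd ℂ) u)) *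
        (((1 - ‖u‖ ^ 2) ^ b : ℝ) : ℂ) * (1 / (1 - u * (starRingEnd ℂ) w) ^ ((2 + b : ℝ) : ℂ))
      = Real.pi * ∑' n, α n * dm b n * (z * (starRingEnd ℂ) w) ^ n := by
  have s1 : Summable fun n => ‖α n * z ^ n‖ :=
    (hG z (mem_ball_zero_iff.1 hz)).summable.norm
  have s2 : Summable fun n => ‖(pc (2 + b) n : ℂ) * (starRingEnd ℂ) w ^ n‖ :=
    (hasSum_pc (2 + b) (by rw [Complex.norm_conj]; exact mem_ball_zero_iff.1 hw)).summable.norm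
  have h := integral_series_mul (γ := b + 2) (by linarith) s1 s2
  have e : ∀ n : ℕ, α n * z ^ n * ((pc (2 + b) n : ℂ) * (starRingEnd ℂ) w ^ n) *
      ((Real.pi : ℂ) * (n.factorial / ∏ j ∈ Finset.range (n + 1), (((b + 2 : ℝ) : ℂ) + 1 + j)))
      = Real.pi * (α n * dm b n * (z * (starRingEnd ℂ) w) ^ n) := by
    intro n
    rw [dm, ← pc_mul_moment hb n, mul_pow]
    ring
  rw [tsum_congr e, tsum_mul_left] at h
  rw [← h]
  refine setIntegral_congr_fun measurableSet_ball fun u hu => ?_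
  have hpos := one_sub_norm_sq_pos hu
  have g1 : ∑' n, α n * z ^ n * (starRingEnd ℂ) u ^ n = G (z * (starRingEnd ℂ) u) := by
    rw [← (hG _ (norm_mul_conj_lt hz hu)).tsum_eq]
    exact tsum_congr fun n => by rw [mul_pow]; ring
  have g2 : ∑' n, (pc (2 + b) n : ℂ) * (starRingEnd ℂ) w ^ n * u ^ n
      = 1 / (1 - u * (starRingEnd ℂ) w) ^ ((2 + b : ℝ) : ℂ) := by
    rw [← (hasSum_pc (2 + b) (norm_mul_conj_lt hu hw)).tsum_eq]
    exact tsum_congr fun n => by rw [mul_pow]; ring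
  have g3 : (1 - ‖u‖ ^ 2) ^ (b + 2) = (1 - ‖u‖ ^ 2) ^ 2 * (1 - ‖u‖ ^ 2) ^ b := by
    rw [add_comm, Real.rpow_add hpos]; norm_cast
  simp only [g1, g2, g3]
  push_cast
  ring

/-- The pairing bound for `ψ(u) = (1 - |u|²)² G(z ū)`, with a constant depending only on `b` and `sup |ψ|`. -/
lemma norm_integral_series_le {b M F : ℝ} (hb : -1 < b) {μ : Measure ℂ} [IsFiniteMeasure μ]
    {α : ℕ → ℂ} {G f : ℂ → ℂ}
    (hG : ∀ y : ℂ, ‖y‖ < 1 → HasSum (fun n => α n * y ^ n) (G y))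
    (hGc : ContinuousOn G (ball 0 1)) {z : ℂ} (hz : z ∈ ball (0 : ℂ) 1)
    (hM : ∀ u ∈ ball (0 : ℂ) 1, (1 - ‖u‖ ^ 2) ^ 2 * ‖G (z * (starRingEnd ℂ) u)‖ ≤ M)
    (hfc : ContinuousOn f (ball 0 1)) (hF : ∀ u ∈ ball (0 : ℂ) 1, ‖f u‖ ≤ F) :
    ‖∫ w in ball (0 : ℂ) 1, f w * ∑' n, α n * dm b n * (z * (starRingEnd ℂ) w) ^ n ∂μ‖ₑ
      ≤ ENNReal.ofReal (M / (1 + b)) * wnorm 1 b (Toep μ b f) := by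
  have hz1 := mem_ball_zero_iff.1 hz
  set ψ : ℂ → ℂ := fun u => (((1 - ‖u‖ ^ 2) ^ 2 : ℝ) : ℂ) * G (z * (starRingEnd ℂ) u) with hψ
  have hnψ : ∀ u, ‖ψ u‖ = (1 - ‖u‖ ^ 2) ^ 2 * ‖G (z * (starRingEnd ℂ) u)‖ := by
    intro u
    rw [hψ, norm_mul, Complex.norm_real, Real.norm_eq_abs, abs_of_nonneg (by positivity)]
  have s1 : Summable fun n => ‖α n * z ^ n‖ := (hG z hz1).summable.norm
  have hψc : ContinuousOn ψ (ball 0 1) := by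
    refine ContinuousOn.mul (by fun_prop) (hGc.comp ?_ fun u hu => ?_)
    · have := Complex.continuous_conj
      fun_prop
    · exact mem_ball_zero_iff.2 (norm_mul_conj_lt hz hu)
  have key := norm_pairing_le hb (μ := μ) (f := f) (ψ := ψ) (C := ∑' n, ‖α n * z ^ n‖) hψc hfc
    (fun u hu => (hnψ u).trans_le (hM u hu)) (fun u hu => ?_) hF
  · rw [setIntegral_congr_fun (g := fun w => (Real.pi : ℂ) * (f w * ∑' n, α n * dm b n *
      (z * (starRingEnd ℂ) w) ^ n)) measurableSet_ball fun w hw => by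
        simp only [hψ, pairing_kernel hb hG hz hw]; ring, integral_const_mul, enorm_mul,
        mul_div_assoc, ENNReal.ofReal_mul Real.pi_pos.le, mul_assoc] at key
    have e : ‖(Real.pi : ℂ)‖ₑ = ENNReal.ofReal Real.pi := by
      rw [← ofReal_norm, Complex.norm_real, Real.norm_eq_abs, abs_of_pos Real.pi_pos]
    rw [e] at key
    exact (ENNReal.mul_le_mul_iff_right (by simpa using Real.pi_pos) ENNReal.ofReal_ne_top).1 key
  · rw [hnψ, mul_comm]
    gcongr
    rw [← (hG _ (norm_mul_conj_lt hz hu)).tsum_eq]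
    refine (norm_tsum_le_tsum_norm (hG _ (norm_mul_conj_lt hz hu)).summable.norm).trans ?_
    refine (hG _ (norm_mul_conj_lt hz hu)).summable.norm.tsum_le_tsum (fun n => ?_) s1
    rw [norm_mul, norm_mul, norm_pow, norm_pow, norm_mul, Complex.norm_conj]
    have := mem_ball_zero_iff.1 hu
    gcongr
    exact mul_le_of_le_one_right (norm_nonneg _) this.le

/-! ### Test functions and compactness -/

/-- The filter of points of the disk approaching the unit circle. -/
noncomputable def bdry : Filter ℂ := comap norm (𝓝[<] (1 : ℝ))

instance : bdry.IsCountablyGenerated := by unfold bdry; infer_instance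

lemma tendsto_norm_bdry : Tendsto (fun z : ℂ => ‖z‖) bdry (𝓝 1) :=
  tendsto_comap.mono_right nhdsWithin_le_nhds

lemma eventually_mem_ball_bdry : ∀ᶠ z in bdry, z ∈ ball (0 : ℂ) 1 := by
  have : ∀ᶠ z in bdry, ‖z‖ ∈ Iio (1 : ℝ) := tendsto_comap.eventually self_mem_nhdsWithin
  exact this.mono fun z hz => mem_ball_zero_iff.2 hz

lemma tendsto_one_sub_rpow_bdry {t : ℝ} (ht : 0 < t) :
    Tendsto (fun z : ℂ => (1 - ‖z‖ ^ 2) ^ t) bdry (𝓝 0) := by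
  have h1 : Tendsto (fun z : ℂ => 1 - ‖z‖ ^ 2) bdry (𝓝 (1 - 1 ^ 2)) :=
    tendsto_const_nhds.sub (tendsto_norm_bdry.pow 2)
  have h2 := h1.rpow_const (p := t) (Or.inr ht.le)
  simpa [Real.zero_rpow ht.ne'] using h2

/-- The test functions `w ↦ w ^ j (1 - |z|²) / (1 - z̄ w) ^ (s + 1)`. The case `j = 0` detects the
boundary decay of `μ`, and `j = 1` occurs in the derivative of the symbol `T_{μ,γ}(1)`. -/
noncomputable def tf (s : ℝ) (j : ℕ) (z w : ℂ) : ℂ :=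
  w ^ j * ((1 - ‖z‖ ^ 2 : ℝ) : ℂ) / (1 - (starRingEnd ℂ) z * w) ^ ((s + 1 : ℝ) : ℂ)

lemma norm_one_sub_conj_mul (z w : ℂ) :
    ‖1 - (starRingEnd ℂ) z * w‖ = ‖1 - z * (starRingEnd ℂ) w‖ := by
  rw [← Complex.norm_conj (1 - (starRingEnd ℂ) z * w)]
  simp

lemma differentiableOn_tf (s : ℝ) (j : ℕ) {z : ℂ} (hz : z ∈ ball (0 : ℂ) 1) :
    DifferentiableOn ℂ (tf s j z) (ball 0 1) := by
  intro w hw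
  have hx : ‖(starRingEnd ℂ) z * w‖ < 1 := by
    have := norm_mul_conj_lt hz hw
    rwa [norm_mul, Complex.norm_conj] at this ⊢
  refine DifferentiableAt.differentiableWithinAt (DifferentiableAt.div (by fun_prop) ?_ ?_)
  · exact DifferentiableAt.cpow (by fun_prop) (by fun_prop) (one_sub_mem_slitPlane hx)
  · intro h0
    exact one_sub_ne_zero_of_norm hx ((Complex.cpow_eq_zero_iff _ _).1 h0).1

lemma norm_tf_le (s : ℝ) (j : ℕ) {z w : ℂ} (hz : z ∈ ball (0 : ℂ) 1) (hw : w ∈ ball (0 : ℂ) 1) :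
    ‖tf s j z w‖ ≤ (1 - ‖z‖ ^ 2) * ‖1 - z * (starRingEnd ℂ) w‖ ^ (-(s + 1)) := by
  have hq := one_sub_norm_sq_pos hz
  have hn := norm_one_sub_pos hz hw
  rw [tf, norm_div, norm_mul, norm_pow, Complex.norm_cpow_real, norm_one_sub_conj_mul,
    Complex.norm_real, Real.norm_eq_abs, abs_of_pos hq, Real.rpow_neg hn.le, ← div_eq_mul_inv]
  gcongr
  exact mul_le_of_le_one_left hq.le (pow_le_one₀ (norm_nonneg _) (mem_ball_zero_iff.1 hw).le)

lemma norm_tf_le_const {s : ℝ} (hs : 0 < s) (j : ℕ) {z w : ℂ} (hz : z ∈ ball (0 : ℂ) 1)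
    (hw : w ∈ ball (0 : ℂ) 1) :
    ‖tf s j z w‖ ≤ (1 - ‖z‖ ^ 2) * ((1 - ‖z‖ ^ 2) / 2) ^ (-(s + 1)) := by
  have hq := one_sub_norm_sq_pos hz
  refine (norm_tf_le s j hz hw).trans ?_
  refine mul_le_mul_of_nonneg_left ?_ hq.le
  exact Real.rpow_le_rpow_of_nonpos (by positivity) (half_le_norm_one_sub hz hw) (by linarith)

/-- The test functions with `s = (2 + a) / p` are bounded in `L^p(ω_a)`, by the Forelli–Rudin
estimate with exponents `a` and `p`. -/
lemma wnorm_tf_le {p a : ℝ} (hp : 0 < p) (ha : -1 < a) (j : ℕ) :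
    ∃ M : ℝ≥0, ∀ z ∈ ball (0 : ℂ) 1, wnorm p a (tf ((2 + a) / p) j z) ≤ M := by
  obtain ⟨C, hC, h⟩ := forelli_rudin ha hp
  have ha1 : 0 < 1 + a := by linarith
  refine ⟨((ENNReal.ofReal Real.pi)⁻¹ * (ENNReal.ofReal (1 + a) * ENNReal.ofReal C)).toNNReal ^ (1 / p),
    fun z hz => ?_⟩
  have hne : (ENNReal.ofReal Real.pi)⁻¹ * (ENNReal.ofReal (1 + a) * ENNReal.ofReal C) ≠ ⊤ := by
    refine ENNReal.mul_ne_top ?_ (ENNReal.mul_ne_top ENNReal.ofReal_ne_top ENNReal.ofReal_ne_top)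
    simpa using Real.pi_pos
  rw [ENNReal.coe_rpow_of_nonneg _ (by positivity), ENNReal.coe_toNNReal hne, wnorm]
  refine ENNReal.rpow_le_rpow ?_ (by positivity)
  rw [dA, Measure.restrict_smul, lintegral_smul_measure, smul_eq_mul]
  gcongr
  have hq := one_sub_norm_sq_pos hz
  calc ∫⁻ w in ball (0 : ℂ) 1, ENNReal.ofReal (‖tf ((2 + a) / p) j z w‖ ^ p * stdW a w)
      ≤ ∫⁻ w in ball (0 : ℂ) 1, ENNReal.ofReal ((1 + a) * (1 - ‖z‖ ^ 2) ^ p) * ENNReal.ofReal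
          ((1 - ‖w‖ ^ 2) ^ a * ‖1 - z * (starRingEnd ℂ) w‖ ^ (-(2 + a + p))) := by
        refine setLIntegral_mono_ae' measurableSet_ball (Eventually.of_forall fun w hw => ?_)
        have hpos := one_sub_norm_sq_pos hw
        have hn := norm_one_sub_pos hz hw
        rw [← ENNReal.ofReal_mul (by positivity)]
        refine ENNReal.ofReal_le_ofReal ?_
        have h1 := Real.rpow_le_rpow (norm_nonneg _) (norm_tf_le ((2 + a) / p) j hz hw) hp.le
        rw [Real.mul_rpow hq.le (Real.rpow_nonneg hn.le _), ← Real.rpow_mul hn.le,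
          show -((2 + a) / p + 1) * p = -(2 + a + p) by field_simp] at h1
        rw [stdW]
        calc _ ≤ ((1 - ‖z‖ ^ 2) ^ p * ‖1 - z * (starRingEnd ℂ) w‖ ^ (-(2 + a + p))) *
              ((1 + a) * (1 - ‖w‖ ^ 2) ^ a) := by gcongr
          _ = _ := by ring
    _ = ENNReal.ofReal ((1 + a) * (1 - ‖z‖ ^ 2) ^ p) * ∫⁻ w in ball (0 : ℂ) 1, ENNReal.ofReal
          ((1 - ‖w‖ ^ 2) ^ a * ‖1 - z * (starRingEnd ℂ) w‖ ^ (-(2 + a + p))) :=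
        lintegral_const_mul' _ _ ENNReal.ofReal_ne_top
    _ ≤ ENNReal.ofReal ((1 + a) * (1 - ‖z‖ ^ 2) ^ p) * ENNReal.ofReal (C * (1 - ‖z‖ ^ 2) ^ (-p)) := by
        gcongr
        exact h z hz
    _ = _ := by
        rw [← ENNReal.ofReal_mul (by positivity), ← ENNReal.ofReal_mul (by positivity)]
        congr 1
        rw [Real.rpow_neg hq.le]
        have := (Real.rpow_pos_of_pos hq p).ne'
        field_simp

lemma tendstoLocallyUniformlyOn_tf {s : ℝ} (hs : 0 < s) (j : ℕ) {y : ℕ → ℂ}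
    (hy : ∀ n, y n ∈ ball (0 : ℂ) 1) (hyl : Tendsto y atTop bdry) :
    TendstoLocallyUniformlyOn (fun n => tf s j (y n)) (fun _ => 0) atTop (ball (0 : ℂ) 1) := by
  rw [Metric.tendstoLocallyUniformlyOn_iff]
  intro ε hε w hw
  rw [mem_ball_zero_iff] at hw
  set r := (1 + ‖w‖) / 2 with hr
  have hr1 : r < 1 := by rw [hr]; linarith
  refine ⟨ball 0 r, mem_nhdsWithin_of_mem_nhds (isOpen_ball.mem_nhds
    (mem_ball_zero_iff.2 (by rw [hr]; linarith))), ?_⟩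
  have hlim : Tendsto (fun n => (1 - ‖y n‖ ^ 2) ^ (1 : ℝ) * (1 - r) ^ (-(s + 1))) atTop (𝓝 0) := by
    have := ((tendsto_one_sub_rpow_bdry one_pos).comp hyl).mul_const ((1 - r) ^ (-(s + 1)))
    simpa using this
  filter_upwards [hlim.eventually (gt_mem_nhds hε)] with n hn v hv
  have hv' : v ∈ ball (0 : ℂ) 1 := ball_subset_ball hr1.le hv
  rw [dist_zero_left]
  refine ((norm_tf_le s j (hy n) hv').trans ?_).trans_lt hn
  rw [Real.rpow_one]
  refine mul_le_mul_of_nonneg_left ?_ (one_sub_norm_sq_pos (hy n)).le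
  refine Real.rpow_le_rpow_of_nonpos (by linarith) ?_ (by linarith)
  have h1 : ‖(1 : ℂ)‖ - ‖y n * (starRingEnd ℂ) v‖ ≤ ‖1 - y n * (starRingEnd ℂ) v‖ :=
    norm_sub_norm_le _ _
  rw [norm_one, norm_mul, Complex.norm_conj] at h1
  have h2 := mem_ball_zero_iff.1 (hy n)
  rw [mem_ball_zero_iff] at hv
  have := norm_nonneg (y n)
  have := norm_nonneg v
  nlinarith

/-- Compactness of the Toeplitz operator, applied to the test functions. -/
lemma tendsto_wnorm_tf {p a b : ℝ} (hp : 0 < p) (ha : -1 < a) {μ : Measure ℂ}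
    (hcpt : ∀ f : ℕ → ℂ → ℂ,
      (∀ n, DifferentiableOn ℂ (f n) (ball (0 : ℂ) 1)) →
      (∃ M : ℝ≥0, ∀ n, wnorm p a (f n) ≤ M) →
      TendstoLocallyUniformlyOn f (fun _ => 0) atTop (ball (0 : ℂ) 1) →
      Tendsto (fun n => wnorm 1 b (Toep μ b (f n))) atTop (𝓝 0)) (j : ℕ) :
    Tendsto (fun z => wnorm 1 b (Toep μ b (tf ((2 + a) / p) j z))) bdry (𝓝 0) := by
  -- The boundary filter is countably generated, so sequences suffice.
  -- The first terms, which may lie outside the disk, are dropped.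
  refine tendsto_of_seq_tendsto fun x hx => ?_
  obtain ⟨N, hN⟩ := eventually_atTop.1 (hx.eventually eventually_mem_ball_bdry)
  rw [← tendsto_add_atTop_iff_nat N]
  have hy : ∀ n, x (n + N) ∈ ball (0 : ℂ) 1 := fun n => hN _ (Nat.le_add_left _ _)
  obtain ⟨M, hM⟩ := wnorm_tf_le hp ha j
  exact hcpt (fun n => tf ((2 + a) / p) j (x (n + N))) (fun n => differentiableOn_tf _ j (hy n))
    ⟨M, fun n => hM _ (hy n)⟩ (tendstoLocallyUniformlyOn_tf (div_pos (by linarith) hp) j hy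
      (hx.comp (tendsto_add_atTop_nat N)))

/-- Pairing the images of the test functions with a fixed family of multiplier series gives
quantities that vanish at the boundary. -/
lemma tendsto_pairing {s b σ M : ℝ} (hs : 0 < s) (hb : -1 < b) {μ : Measure ℂ} [IsFiniteMeasure μ]
    {j : ℕ} (hT : Tendsto (fun z => wnorm 1 b (Toep μ b (tf s j z))) bdry (𝓝 0))
    {α : ℕ → ℂ} {G : ℂ → ℂ} (hG : ∀ y : ℂ, ‖y‖ < 1 → HasSum (fun n => α n * y ^ n) (G y))
    (hGc : ContinuousOn G (ball 0 1))
    (hM : ∀ z ∈ ball (0 : ℂ) 1, ∀ u ∈ ball (0 : ℂ) 1,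
      (1 - ‖z‖ ^ 2) ^ σ * ((1 - ‖u‖ ^ 2) ^ 2 * ‖G (z * (starRingEnd ℂ) u)‖) ≤ M) :
    Tendsto (fun z => ENNReal.ofReal ((1 - ‖z‖ ^ 2) ^ σ) *
      ‖∫ w in ball (0 : ℂ) 1, tf s j z w * ∑' n, α n * dm b n * (z * (starRingEnd ℂ) w) ^ n ∂μ‖ₑ)
      bdry (𝓝 0) := by
  have hlim : Tendsto (fun z => ENNReal.ofReal (M / (1 + b)) * wnorm 1 b (Toep μ b (tf s j z)))
      bdry (𝓝 0) := by
    simpa using ENNReal.Tendsto.const_mul hT (Or.inr ENNReal.ofReal_ne_top)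
  refine tendsto_of_tendsto_of_tendsto_of_le_of_le' tendsto_const_nhds hlim
    (Eventually.of_forall fun _ => zero_le) ?_
  filter_upwards [eventually_mem_ball_bdry] with z hz
  have hq := Real.rpow_pos_of_pos (one_sub_norm_sq_pos hz) σ
  have key := norm_integral_series_le (M := M / (1 - ‖z‖ ^ 2) ^ σ) hb (μ := μ) hG hGc hz
    (fun u hu => by rw [le_div_iff₀ hq, mul_comm]; exact hM z hz u hu)
    (differentiableOn_tf s j hz).continuousOn (fun u hu => norm_tf_le_const hs j hz hu)
  refine (mul_le_mul_right key _).trans ?_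
  rw [← mul_assoc, ← ENNReal.ofReal_mul hq.le]
  apply le_of_eq
  congr 2
  field_simp

/-! ### A vanishing Carleson condition -/

lemma pc_add_one {c : ℝ} (hc : 0 < c) (n : ℕ) : c * pc (c + 1) n = (c + n) * pc c n := by
  induction n with
  | zero => simp [pc_zero]
  | succ k ih =>
    have h : (k : ℝ) + 1 ≠ 0 := by positivity
    rw [pc_succ, pc_succ, ← mul_assoc, ih]
    push_cast
    field_simp
    ring

/-- The coefficients which the moment multipliers turn into those of `(1 - x) ^ (-c)`. -/
noncomputable def liftCoeff (b c : ℝ) (n : ℕ) : ℝ := pc c n * ((n + b + 2) * (n + b + 3)) / (b + 2)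

lemma liftCoeff_mul_dm {b : ℝ} (hb : -1 < b) (c : ℝ) (n : ℕ) :
    liftCoeff b c n * dm b n = pc c n := by
  have : (0 : ℝ) ≤ n := Nat.cast_nonneg n
  have h1 : (n : ℝ) + b + 2 ≠ 0 := by linarith
  have h2 : (n : ℝ) + b + 3 ≠ 0 := by linarith
  have h3 : b + 2 ≠ 0 := by linarith
  rw [liftCoeff, dm]
  field_simp

/-- The sum of `∑ liftCoeff b c n * y ^ n`, obtained by expanding `(n + b + 2) (n + b + 3)` in the
basis `(n + c) (n + c + 1)`, `n + c`, `1`. -/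
noncomputable def liftSum (b c : ℝ) (y : ℂ) : ℂ :=
  ((c * (c + 1) / (b + 2) : ℝ) : ℂ) * (1 / (1 - y) ^ ((c + 2 : ℝ) : ℂ))
  + ((2 * (b + 2 - c) * c / (b + 2) : ℝ) : ℂ) * (1 / (1 - y) ^ ((c + 1 : ℝ) : ℂ))
  + (((b + 2 - c) * (b + 2 - c + 1) / (b + 2) : ℝ) : ℂ) * (1 / (1 - y) ^ ((c : ℝ) : ℂ))

lemma hasSum_liftCoeff {b c : ℝ} (hb : -1 < b) (hc : 0 < c) {y : ℂ} (hy : ‖y‖ < 1) :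
    HasSum (fun n => (liftCoeff b c n : ℂ) * y ^ n) (liftSum b c y) := by
  have h := (((hasSum_pc (c + 2) hy).mul_left ((c * (c + 1) / (b + 2) : ℝ) : ℂ)).add
    ((hasSum_pc (c + 1) hy).mul_left ((2 * (b + 2 - c) * c / (b + 2) : ℝ) : ℂ))).add
    ((hasSum_pc c hy).mul_left (((b + 2 - c) * (b + 2 - c + 1) / (b + 2) : ℝ) : ℂ))
  refine h.congr_fun fun n => ?_
  have hb2 : b + 2 ≠ 0 := by linarith
  have e1 := pc_add_one hc n
  have e2 := pc_add_one (c := c + 1) (by linarith) n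
  rw [show c + 1 + 1 = c + 2 by ring] at e2
  have e : liftCoeff b c n = c * (c + 1) / (b + 2) * pc (c + 2) n +
      2 * (b + 2 - c) * c / (b + 2) * pc (c + 1) n +
      (b + 2 - c) * (b + 2 - c + 1) / (b + 2) * pc c n := by
    rw [liftCoeff]
    field_simp
    linear_combination (-c) * e2 - (c + 1 + n) * e1 - 2 * (b + 2 - c) * e1
  rw [e]
  push_cast
  ring

lemma continuousOn_one_div_cpow (c : ℝ) :
    ContinuousOn (fun y : ℂ => 1 / (1 - y) ^ (c : ℂ)) (ball 0 1) := by
  refine ContinuousOn.div continuousOn_const ?_ ?_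
  · exact ContinuousOn.cpow (by fun_prop) continuousOn_const fun y hy =>
      one_sub_mem_slitPlane (mem_ball_zero_iff.1 hy)
  · intro y hy h0
    exact one_sub_ne_zero_of_norm (mem_ball_zero_iff.1 hy) ((Complex.cpow_eq_zero_iff _ _).1 h0).1

lemma continuousOn_liftSum (b c : ℝ) : ContinuousOn (liftSum b c) (ball 0 1) :=
  ((continuousOn_const.mul (continuousOn_one_div_cpow _)).add
    (continuousOn_const.mul (continuousOn_one_div_cpow _))).add
    (continuousOn_const.mul (continuousOn_one_div_cpow _))

lemma half_le_norm_one_sub' {z u : ℂ} (hz : z ∈ ball (0 : ℂ) 1) (hu : u ∈ ball (0 : ℂ) 1) :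
    (1 - ‖u‖ ^ 2) / 2 ≤ ‖1 - z * (starRingEnd ℂ) u‖ := by
  have := half_le_norm_one_sub hu hz
  rwa [← norm_one_sub_conj_mul, mul_comm] at this

/-- Both `1 - |z|²` and `1 - |u|²` are at most `2 |1 - z ū|`. -/
lemma weight_mul_kernel_le {c : ℝ} (hc : 0 ≤ c) {i : ℕ} (hi : i ≤ 2) {z u : ℂ}
    (hz : z ∈ ball (0 : ℂ) 1) (hu : u ∈ ball (0 : ℂ) 1) :
    (1 - ‖z‖ ^ 2) ^ c * ((1 - ‖u‖ ^ 2) ^ 2 *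
      ‖1 / (1 - z * (starRingEnd ℂ) u) ^ ((c + i : ℝ) : ℂ)‖) ≤ 4 * 2 ^ c := by
  have hqz := one_sub_norm_sq_pos hz
  have hqu := one_sub_norm_sq_pos hu
  have hn := norm_one_sub_pos hz hu
  have h1 := half_le_norm_one_sub hz hu
  have h2 := half_le_norm_one_sub' hz hu
  set N := ‖1 - z * (starRingEnd ℂ) u‖ with hN
  rw [norm_div, norm_one, Complex.norm_cpow_real, ← hN, Real.rpow_add hn, Real.rpow_natCast]
  have a1 : (1 - ‖z‖ ^ 2) ^ c ≤ 2 ^ c * N ^ c := by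
    rw [← Real.mul_rpow zero_le_two hn.le]
    exact Real.rpow_le_rpow hqz.le (by linarith) hc
  have a2 : (1 - ‖u‖ ^ 2) ^ 2 ≤ 4 * N ^ i := by
    calc (1 - ‖u‖ ^ 2) ^ 2 ≤ (1 - ‖u‖ ^ 2) ^ i :=
          pow_le_pow_of_le_one hqu.le (by nlinarith [norm_nonneg u]) hi
      _ ≤ (2 * N) ^ i := by gcongr; linarith
      _ = 2 ^ i * N ^ i := mul_pow _ _ _
      _ ≤ 2 ^ 2 * N ^ i := by gcongr; norm_num
      _ = 4 * N ^ i := by norm_num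
  have hNc := Real.rpow_pos_of_pos hn c
  have hNi : 0 < N ^ i := by positivity
  calc (1 - ‖z‖ ^ 2) ^ c * ((1 - ‖u‖ ^ 2) ^ 2 * (1 / (N ^ c * N ^ i)))
      ≤ (2 ^ c * N ^ c) * ((4 * N ^ i) * (1 / (N ^ c * N ^ i))) := by gcongr
    _ = 4 * 2 ^ c := by field_simp

lemma liftSum_bound (b : ℝ) {c : ℝ} (hc : 0 ≤ c) : ∃ M, ∀ z ∈ ball (0 : ℂ) 1, ∀ u ∈ ball (0 : ℂ) 1,
    (1 - ‖z‖ ^ 2) ^ c * ((1 - ‖u‖ ^ 2) ^ 2 * ‖liftSum b c (z * (starRingEnd ℂ) u)‖) ≤ M := by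
  refine ⟨|c * (c + 1) / (b + 2)| * (4 * 2 ^ c) + |2 * (b + 2 - c) * c / (b + 2)| * (4 * 2 ^ c)
    + |(b + 2 - c) * (b + 2 - c + 1) / (b + 2)| * (4 * 2 ^ c), fun z hz u hu => ?_⟩
  have k0 := weight_mul_kernel_le hc (i := 0) (by norm_num) hz hu
  have k1 := weight_mul_kernel_le hc (i := 1) (by norm_num) hz hu
  have k2 := weight_mul_kernel_le hc (i := 2) le_rfl hz hu
  simp only [Nat.cast_zero, Nat.cast_one, Nat.cast_ofNat, add_zero] at k0 k1 k2
  have hqz := Real.rpow_pos_of_pos (one_sub_norm_sq_pos hz) c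
  have hqu := one_sub_norm_sq_pos hu
  rw [liftSum]
  refine (mul_le_mul_of_nonneg_left (mul_le_mul_of_nonneg_left (norm_add₃_le) (by positivity))
    hqz.le).trans ?_
  rw [norm_mul, norm_mul, norm_mul, Complex.norm_real, Complex.norm_real, Complex.norm_real,
    Real.norm_eq_abs, Real.norm_eq_abs, Real.norm_eq_abs]
  have m2 := mul_le_mul_of_nonneg_left k2 (abs_nonneg (c * (c + 1) / (b + 2)))
  have m1 := mul_le_mul_of_nonneg_left k1 (abs_nonneg (2 * (b + 2 - c) * c / (b + 2)))
  have m0 := mul_le_mul_of_nonneg_left k0 (abs_nonneg ((b + 2 - c) * (b + 2 - c + 1) / (b + 2)))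
  linarith

/-- The Berezin-type transform of `μ`, whose decay at the boundary is a vanishing Carleson
condition. -/
noncomputable def ber (μ : Measure ℂ) (s : ℝ) (z : ℂ) : ℝ≥0∞ :=
  ∫⁻ w in ball (0 : ℂ) 1,
    ENNReal.ofReal ((1 - ‖z‖ ^ 2) ^ (s + 2) * ‖1 - z * (starRingEnd ℂ) w‖ ^ (-(2 * s + 2))) ∂μ

/-- The test function times the conjugate kernel is the positive integrand of `ber`, up to a power
of `1 - |z|²`. -/
lemma tf_zero_mul {s : ℝ} {z w : ℂ} (hz : z ∈ ball (0 : ℂ) 1) (hw : w ∈ ball (0 : ℂ) 1) :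
    tf s 0 z w * (1 / (1 - z * (starRingEnd ℂ) w) ^ ((s + 1 : ℝ) : ℂ))
      = (((1 - ‖z‖ ^ 2) * ‖1 - z * (starRingEnd ℂ) w‖ ^ (-(2 * s + 2)) : ℝ) : ℂ) := by
  have hx := norm_mul_conj_lt hz hw
  have hn := norm_one_sub_pos hz hw
  have hconj : 1 - (starRingEnd ℂ) z * w = (starRingEnd ℂ) (1 - z * (starRingEnd ℂ) w) := by simp
  rw [tf, hconj, Complex.conj_cpow _ _ (Complex.mem_slitPlane_iff_arg.1 (one_sub_mem_slitPlane hx)).1,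
    Complex.conj_ofReal, pow_zero, one_mul, div_mul_div_comm, mul_one, mul_comm ((starRingEnd ℂ) _),
    Complex.mul_conj, Complex.normSq_eq_norm_sq, Complex.norm_cpow_real, ← Complex.ofReal_div]
  congr 1
  rw [Real.rpow_neg hn.le, div_eq_mul_inv,
    ← Real.rpow_natCast (‖1 - z * (starRingEnd ℂ) w‖ ^ (s + 1)) 2, ← Real.rpow_mul hn.le]
  congr 3
  push_cast
  ring

lemma rpow_kernel_le {e : ℝ} (he : 0 ≤ e) {z w : ℂ} (hz : z ∈ ball (0 : ℂ) 1)
    (hw : w ∈ ball (0 : ℂ) 1) :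
    ‖1 - z * (starRingEnd ℂ) w‖ ^ (-e) ≤ ((1 - ‖z‖ ^ 2) / 2) ^ (-e) :=
  Real.rpow_le_rpow_of_nonpos (by have := one_sub_norm_sq_pos hz; positivity)
    (half_le_norm_one_sub hz hw) (by linarith)

lemma measurable_kernel (z : ℂ) (e : ℝ) :
    Measurable fun w : ℂ => ‖1 - z * (starRingEnd ℂ) w‖ ^ e := by
  have : Measurable (starRingEnd ℂ) := Complex.continuous_conj.measurable
  fun_prop

/-- The vanishing Carleson condition: pairing the test functions with `liftSum`, whose multiplied
series is `(1 - z w̄) ^ (-(s + 1))`, gives exactly the transform `ber μ s`. -/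
lemma tendsto_ber {s b : ℝ} (hs : 0 < s) (hb : -1 < b) {μ : Measure ℂ} [IsFiniteMeasure μ]
    (hT : Tendsto (fun z => wnorm 1 b (Toep μ b (tf s 0 z))) bdry (𝓝 0)) :
    Tendsto (ber μ s) bdry (𝓝 0) := by
  obtain ⟨M, hM⟩ := liftSum_bound b (c := s + 1) (by linarith)
  have h := tendsto_pairing hs hb hT (α := fun n => (liftCoeff b (s + 1) n : ℂ))
    (G := liftSum b (s + 1)) (fun y hy => hasSum_liftCoeff hb (by linarith) hy)
    (continuousOn_liftSum _ _) hM
  refine h.congr' ?_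
  filter_upwards [eventually_mem_ball_bdry] with z hz
  have hq := one_sub_norm_sq_pos hz
  have e1 : ∫ w in ball (0 : ℂ) 1, tf s 0 z w * ∑' n, (liftCoeff b (s + 1) n : ℂ) * dm b n *
      (z * (starRingEnd ℂ) w) ^ n ∂μ = ((∫ w in ball (0 : ℂ) 1,
        (1 - ‖z‖ ^ 2) * ‖1 - z * (starRingEnd ℂ) w‖ ^ (-(2 * s + 2)) ∂μ : ℝ) : ℂ) := by
    rw [← integral_complex_ofReal]
    refine setIntegral_congr_fun measurableSet_ball fun w hw => ?_
    rw [← tf_zero_mul hz hw,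
      ← (hasSum_pc (s + 1) (norm_mul_conj_lt hz hw)).tsum_eq]
    congr 1
    refine tsum_congr fun n => ?_
    rw [← liftCoeff_mul_dm hb]
    push_cast
    ring
  have hint : Integrable (fun w => (1 - ‖z‖ ^ 2) * ‖1 - z * (starRingEnd ℂ) w‖ ^ (-(2 * s + 2)))
      (μ.restrict (ball 0 1)) := by
    refine Integrable.const_mul (Integrable.of_bound
      (measurable_kernel z _).aestronglyMeasurable (((1 - ‖z‖ ^ 2) / 2) ^ (-(2 * s + 2)))
      ((ae_restrict_mem measurableSet_ball).mono fun w hw => ?_)) _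
    rw [Real.norm_eq_abs, abs_of_nonneg (by positivity)]
    exact rpow_kernel_le (by linarith) hz hw
  rw [e1, ← ofReal_norm, Complex.norm_real, Real.norm_eq_abs, abs_of_nonneg
    (integral_nonneg fun w => by positivity), ofReal_integral_eq_lintegral_ofReal hint
    (Eventually.of_forall fun w => by positivity), ← lintegral_const_mul' _ _ ENNReal.ofReal_ne_top,
    ber]
  refine lintegral_congr fun w => ?_
  rw [← ENNReal.ofReal_mul (by positivity)]
  congr 1
  have e2 : (1 - ‖z‖ ^ 2) ^ (s + 2) = (1 - ‖z‖ ^ 2) ^ (s + 1) * (1 - ‖z‖ ^ 2) := by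
    rw [← Real.rpow_add_one hq.ne']
    congr 1
    ring
  rw [e2]
  ring

/-! ### Kernel integrals against the measure -/

lemma measurable_kernel₂ (z : ℂ) (e d : ℝ) :
    Measurable fun ζ : ℂ => ENNReal.ofReal (‖1 - z * (starRingEnd ℂ) ζ‖ ^ e * (1 - ‖ζ‖ ^ 2) ^ d) := by
  have : Measurable (starRingEnd ℂ) := Complex.continuous_conj.measurable
  fun_prop

/-- A reproducing estimate: a kernel is dominated by its average against a localized kernel,
as the latter is of size `h⁻²` on the disk of radius `h / 2` about `w`, where `h = 1 - |w|`. -/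
lemma kernel_le_average {s e : ℝ} (he : 0 ≤ e) (hs : 0 ≤ s) : ∃ C : ℝ≥0∞, C ≠ ⊤ ∧
    ∀ z ∈ ball (0 : ℂ) 1, ∀ w ∈ ball (0 : ℂ) 1,
      ENNReal.ofReal (‖1 - z * (starRingEnd ℂ) w‖ ^ (-e)) ≤ C * ∫⁻ ζ in ball (0 : ℂ) 1,
        ENNReal.ofReal (‖1 - z * (starRingEnd ℂ) ζ‖ ^ (-e) * (1 - ‖ζ‖ ^ 2) ^ (s - 2)) *
        ENNReal.ofReal ((1 - ‖ζ‖ ^ 2) ^ (s + 2) * ‖1 - ζ * (starRingEnd ℂ) w‖ ^ (-(2 * s + 2))) := by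
  set c : ℝ := 2 ^ (-e) * 2⁻¹ ^ (2 * s) * 3 ^ (-(2 * s + 2)) with hc
  have hc0 : 0 < c := by positivity
  have hpi := Real.pi_pos
  refine ⟨ENNReal.ofReal (4 / (Real.pi * c)), ENNReal.ofReal_ne_top, fun z hz w hw => ?_⟩
  have hN := norm_one_sub_pos hz hw
  set N := ‖1 - z * (starRingEnd ℂ) w‖ with hNdef
  have hw1 := mem_ball_zero_iff.1 hw
  set h := 1 - ‖w‖ with hh
  have hh0 : 0 < h := by linarith
  have hhN : h ≤ N := by
    have h1 : ‖(1 : ℂ)‖ - ‖z * (starRingEnd ℂ) w‖ ≤ N := norm_sub_norm_le _ _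
    rw [norm_one, norm_mul, Complex.norm_conj] at h1
    have := mem_ball_zero_iff.1 hz
    have := norm_nonneg w
    nlinarith
  have hsub : ball w (h / 2) ⊆ ball (0 : ℂ) 1 := by
    intro ζ hζ
    rw [mem_ball, dist_eq_norm] at hζ
    have := norm_sub_norm_le ζ w
    rw [mem_ball_zero_iff]
    linarith
  have hlow : ∀ ζ ∈ ball w (h / 2), ENNReal.ofReal (N ^ (-e) * c * h ^ (-2 : ℝ)) ≤
      ENNReal.ofReal (‖1 - z * (starRingEnd ℂ) ζ‖ ^ (-e) * (1 - ‖ζ‖ ^ 2) ^ (s - 2)) *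
      ENNReal.ofReal ((1 - ‖ζ‖ ^ 2) ^ (s + 2) * ‖1 - ζ * (starRingEnd ℂ) w‖ ^ (-(2 * s + 2))) := by
    intro ζ hζ
    have hζ1 := hsub hζ
    have hq := one_sub_norm_sq_pos hζ1
    have hn1 := norm_one_sub_pos hz hζ1
    have hn2 := norm_one_sub_pos hζ1 hw
    rw [mem_ball, dist_eq_norm] at hζ
    have b1 : ‖1 - z * (starRingEnd ℂ) ζ‖ ≤ 2 * N := by
      have e1 : 1 - z * (starRingEnd ℂ) ζ = (1 - z * (starRingEnd ℂ) w)
          - z * (starRingEnd ℂ) (ζ - w) := by rw [map_sub]; ring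
      rw [e1]
      refine (norm_sub_le _ _).trans ?_
      rw [norm_mul, Complex.norm_conj]
      have := mem_ball_zero_iff.1 hz
      have := norm_nonneg (ζ - w)
      nlinarith
    have b2 : h / 2 ≤ 1 - ‖ζ‖ ^ 2 := by
      have := norm_sub_norm_le ζ w
      have := norm_nonneg ζ
      nlinarith
    have b3 : ‖1 - ζ * (starRingEnd ℂ) w‖ ≤ 3 * h := by
      have e1 : 1 - ζ * (starRingEnd ℂ) w = ((1 - ‖w‖ ^ 2 : ℝ) : ℂ)
          - (ζ - w) * (starRingEnd ℂ) w := by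
        push_cast
        rw [sub_mul, Complex.mul_conj, Complex.normSq_eq_norm_sq]
        push_cast
        ring
      rw [e1]
      refine (norm_sub_le _ _).trans ?_
      rw [norm_mul, Complex.norm_conj, Complex.norm_real, Real.norm_eq_abs,
        abs_of_pos (one_sub_norm_sq_pos hw)]
      have := norm_nonneg (ζ - w)
      have := norm_nonneg w
      nlinarith
    rw [← ENNReal.ofReal_mul (by positivity)]
    refine ENNReal.ofReal_le_ofReal ?_
    have c1 : (2 * N) ^ (-e) ≤ ‖1 - z * (starRingEnd ℂ) ζ‖ ^ (-e) :=
      Real.rpow_le_rpow_of_nonpos hn1 b1 (by linarith)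
    have c2 : (h / 2) ^ (2 * s) ≤ (1 - ‖ζ‖ ^ 2) ^ (s - 2) * (1 - ‖ζ‖ ^ 2) ^ (s + 2) := by
      rw [← Real.rpow_add hq, show s - 2 + (s + 2) = 2 * s by ring]
      exact Real.rpow_le_rpow (by positivity) b2 (by positivity)
    have c3 : (3 * h) ^ (-(2 * s + 2)) ≤ ‖1 - ζ * (starRingEnd ℂ) w‖ ^ (-(2 * s + 2)) :=
      Real.rpow_le_rpow_of_nonpos hn2 b3 (by linarith)
    have e2 : h ^ (-2 : ℝ) = h ^ (2 * s) * h ^ (-(2 * s + 2)) := by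
      rw [← Real.rpow_add hh0]; congr 1; ring
    calc N ^ (-e) * c * h ^ (-2 : ℝ)
        = (2 * N) ^ (-e) * (h / 2) ^ (2 * s) * (3 * h) ^ (-(2 * s + 2)) := by
          rw [hc, e2, div_eq_mul_inv, Real.mul_rpow zero_le_two hN.le,
            Real.mul_rpow hh0.le (by norm_num), Real.mul_rpow (by norm_num) hh0.le]
          ring
      _ ≤ ‖1 - z * (starRingEnd ℂ) ζ‖ ^ (-e) *
            ((1 - ‖ζ‖ ^ 2) ^ (s - 2) * (1 - ‖ζ‖ ^ 2) ^ (s + 2)) *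
            ‖1 - ζ * (starRingEnd ℂ) w‖ ^ (-(2 * s + 2)) := by gcongr
      _ = _ := by ring
  calc ENNReal.ofReal (N ^ (-e))
      = ENNReal.ofReal (4 / (Real.pi * c)) *
          (ENNReal.ofReal (N ^ (-e) * c * h ^ (-2 : ℝ)) * volume (ball w (h / 2))) := by
        rw [Complex.volume_ball, ← ENNReal.ofReal_pow (by positivity),
          show ((NNReal.pi : ℝ≥0) : ℝ≥0∞) = ENNReal.ofReal Real.pi by
            rw [← NNReal.coe_real_pi, ENNReal.ofReal_coe_nnreal],
          ← ENNReal.ofReal_mul (by positivity), ← ENNReal.ofReal_mul (by positivity),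
          ← ENNReal.ofReal_mul (by positivity)]
        congr 1
        rw [show (-2 : ℝ) = ((-2 : ℤ) : ℝ) by norm_num, Real.rpow_intCast]
        field_simp
        norm_num
    _ = ENNReal.ofReal (4 / (Real.pi * c)) *
          ∫⁻ ζ in ball w (h / 2), ENNReal.ofReal (N ^ (-e) * c * h ^ (-2 : ℝ)) := by
        rw [setLIntegral_const]
    _ ≤ _ := by
        exact mul_le_mul_right ((setLIntegral_mono_ae' measurableSet_ball
          (Eventually.of_forall hlow)).trans (lintegral_mono_set hsub)) _

/-- Integration of `kernel_le_average` against `μ`: a kernel integral against `μ` is dominated by an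
area integral against `ber μ s`. -/
lemma lintegral_kernel_le_ber {s e : ℝ} (he : 0 ≤ e) (hs : 0 ≤ s) (μ : Measure ℂ)
    [IsFiniteMeasure μ] : ∃ C : ℝ≥0∞, C ≠ ⊤ ∧ ∀ z ∈ ball (0 : ℂ) 1,
      ∫⁻ w in ball (0 : ℂ) 1, ENNReal.ofReal (‖1 - z * (starRingEnd ℂ) w‖ ^ (-e)) ∂μ ≤
      C * ∫⁻ ζ in ball (0 : ℂ) 1,
        ENNReal.ofReal (‖1 - z * (starRingEnd ℂ) ζ‖ ^ (-e) * (1 - ‖ζ‖ ^ 2) ^ (s - 2)) * ber μ s ζ := by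
  obtain ⟨C, hC, h⟩ := kernel_le_average he hs
  refine ⟨C, hC, fun z hz => ?_⟩
  refine (setLIntegral_mono_ae' measurableSet_ball (Eventually.of_forall (h z hz))).trans ?_
  rw [lintegral_const_mul' _ _ hC]
  refine mul_le_mul_right ?_ _
  have hm : Measurable (starRingEnd ℂ) := Complex.continuous_conj.measurable
  rw [lintegral_lintegral_swap]
  · apply le_of_eq
    refine lintegral_congr fun ζ => ?_
    rw [lintegral_const_mul' _ _ ENNReal.ofReal_ne_top, ber]
  · apply Measurable.aemeasurable
    unfold Function.uncurry
    fun_prop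

lemma ber_le_of_norm_le {s ρ : ℝ} (hs : 0 ≤ s) (hρ : ρ < 1) (μ : Measure ℂ) [IsFiniteMeasure μ] :
    ∃ K : ℝ≥0∞, K ≠ ⊤ ∧ ∀ z : ℂ, ‖z‖ ≤ ρ → ber μ s z ≤ K := by
  refine ⟨ENNReal.ofReal ((1 - ρ) ^ (-(2 * s + 2))) * μ (ball 0 1),
    ENNReal.mul_ne_top ENNReal.ofReal_ne_top (measure_ne_top _ _), fun z hz => ?_⟩
  have hz1 : z ∈ ball (0 : ℂ) 1 := mem_ball_zero_iff.2 (hz.trans_lt hρ)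
  have hq := one_sub_norm_sq_pos hz1
  rw [ber, ← setLIntegral_const]
  refine setLIntegral_mono_ae' measurableSet_ball (Eventually.of_forall fun w hw => ?_)
  refine ENNReal.ofReal_le_ofReal ?_
  have h1 : ‖(1 : ℂ)‖ - ‖z * (starRingEnd ℂ) w‖ ≤ ‖1 - z * (starRingEnd ℂ) w‖ := norm_sub_norm_le _ _
  rw [norm_one, norm_mul, Complex.norm_conj] at h1
  have hw1 := mem_ball_zero_iff.1 hw
  have h2 : 1 - ρ ≤ ‖1 - z * (starRingEnd ℂ) w‖ := by
    have := norm_nonneg z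
    have := norm_nonneg w
    nlinarith
  calc _ ≤ 1 * (1 - ρ) ^ (-(2 * s + 2)) := by
        refine mul_le_mul ?_ ?_ (by positivity) zero_le_one
        · exact Real.rpow_le_one hq.le (by nlinarith [norm_nonneg z]) (by linarith)
        · exact Real.rpow_le_rpow_of_nonpos (by linarith) h2 (by linarith)
    _ = _ := one_mul _

/-- Decay of `ber` passes to all kernel integrals with a larger exponent. The Forelli–Rudin estimate
with weight exponent `s - 2`, which exceeds `-1` since `s > 1`, handles the part near the circle,
and the factor `(1 - |z|²) ^ t` the part in a smaller disk. -/
lemma tendsto_lintegral_kernel {s t : ℝ} (hs : 1 < s) (ht : 0 < t) {μ : Measure ℂ}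
    [IsFiniteMeasure μ] (hB : Tendsto (ber μ s) bdry (𝓝 0)) :
    Tendsto (fun z => ENNReal.ofReal ((1 - ‖z‖ ^ 2) ^ t) *
      ∫⁻ w in ball (0 : ℂ) 1, ENNReal.ofReal (‖1 - z * (starRingEnd ℂ) w‖ ^ (-(s + t))) ∂μ)
      bdry (𝓝 0) := by
  obtain ⟨C, hC, h⟩ := lintegral_kernel_le_ber (s := s) (e := s + t) (by linarith) (by linarith) μ
  obtain ⟨R, hR, hFR⟩ := forelli_rudin (a := s - 2) (t := t) (by linarith) ht
  suffices hmain : Tendsto (fun z => ENNReal.ofReal ((1 - ‖z‖ ^ 2) ^ t) * ∫⁻ ζ in ball (0 : ℂ) 1,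
      ENNReal.ofReal (‖1 - z * (starRingEnd ℂ) ζ‖ ^ (-(s + t)) * (1 - ‖ζ‖ ^ 2) ^ (s - 2)) *
        ber μ s ζ) bdry (𝓝 0) by
    have hlim := ENNReal.Tendsto.const_mul hmain (a := C) (Or.inr hC)
    rw [mul_zero] at hlim
    refine tendsto_of_tendsto_of_tendsto_of_le_of_le' tendsto_const_nhds hlim
      (Eventually.of_forall fun _ => zero_le) ?_
    filter_upwards [eventually_mem_ball_bdry] with z hz
    rw [mul_left_comm]
    gcongr
    exact h z hz
  have hFR' : ∀ z ∈ ball (0 : ℂ) 1, ENNReal.ofReal ((1 - ‖z‖ ^ 2) ^ t) * ∫⁻ ζ in ball (0 : ℂ) 1,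
      ENNReal.ofReal (‖1 - z * (starRingEnd ℂ) ζ‖ ^ (-(s + t)) * (1 - ‖ζ‖ ^ 2) ^ (s - 2)) ≤
      ENNReal.ofReal R := by
    intro z hz
    have hq := one_sub_norm_sq_pos hz
    have := hFR z hz
    rw [show 2 + (s - 2) + t = s + t by ring] at this
    calc _ ≤ ENNReal.ofReal ((1 - ‖z‖ ^ 2) ^ t) * ENNReal.ofReal (R * (1 - ‖z‖ ^ 2) ^ (-t)) :=
          mul_le_mul_right ((lintegral_congr fun ζ => by rw [mul_comm]).trans_le this) _
      _ = _ := by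
          rw [← ENNReal.ofReal_mul (by positivity), Real.rpow_neg hq.le]
          congr 1
          have := (Real.rpow_pos_of_pos hq t).ne'
          field_simp
  have hI0 : ∫⁻ ζ in ball (0 : ℂ) 1, ENNReal.ofReal ((1 - ‖ζ‖ ^ 2) ^ (s - 2)) ≤ ENNReal.ofReal R := by
    simpa using hFR' 0 (by simp)
  rw [ENNReal.tendsto_nhds_zero]
  intro ε hε
  set δ : ℝ≥0∞ := ε / 2 / (ENNReal.ofReal R + 1) with hδ
  have hδ0 : 0 < δ := ENNReal.div_pos (ENNReal.half_pos hε.ne').ne' (by simp)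
  have hδR : δ * ENNReal.ofReal R ≤ ε / 2 := by
    calc δ * ENNReal.ofReal R ≤ δ * (ENNReal.ofReal R + 1) := by gcongr; exact le_self_add
      _ ≤ ε / 2 := by rw [mul_comm]; exact ENNReal.mul_div_le
  -- the transform is at most `δ` outside a smaller disk of radius `ρ`
  obtain ⟨ρ, hρ1, hρ⟩ : ∃ ρ < 1, ∀ ζ ∈ ball (0 : ℂ) 1, ρ < ‖ζ‖ → ber μ s ζ ≤ δ := by
    have h1 := ENNReal.tendsto_nhds_zero.1 hB δ hδ0
    rw [bdry, eventually_comap] at h1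
    obtain ⟨ρ, hρ1, hρ⟩ := mem_nhdsLT_iff_exists_Ioo_subset.1 h1
    exact ⟨ρ, hρ1, fun ζ hζ hl => hρ (a := ‖ζ‖) ⟨hl, mem_ball_zero_iff.1 hζ⟩ ζ rfl⟩
  obtain ⟨K, hK, hKb⟩ := ber_le_of_norm_le (s := s) (by linarith) hρ1 μ
  set L : ℝ≥0∞ := K * (ENNReal.ofReal ((1 - ρ) ^ (-(s + t))) * ENNReal.ofReal R) with hL
  have hLtop : L ≠ ⊤ := ENNReal.mul_ne_top hK (ENNReal.mul_ne_top ENNReal.ofReal_ne_top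
    ENNReal.ofReal_ne_top)
  have hlim : Tendsto (fun z : ℂ => ENNReal.ofReal ((1 - ‖z‖ ^ 2) ^ t) * L) bdry (𝓝 0) := by
    have h1 := ENNReal.tendsto_ofReal (tendsto_one_sub_rpow_bdry ht)
    have h2 := ENNReal.Tendsto.mul_const h1 (b := L) (Or.inr hLtop)
    simpa using h2
  filter_upwards [eventually_mem_ball_bdry,
    ENNReal.tendsto_nhds_zero.1 hlim (ε / 2) (ENNReal.half_pos hε.ne')] with z hz hzL
  have hpt : ∀ ζ ∈ ball (0 : ℂ) 1,
      ENNReal.ofReal (‖1 - z * (starRingEnd ℂ) ζ‖ ^ (-(s + t)) * (1 - ‖ζ‖ ^ 2) ^ (s - 2)) * ber μ s ζ ≤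
      δ * ENNReal.ofReal (‖1 - z * (starRingEnd ℂ) ζ‖ ^ (-(s + t)) * (1 - ‖ζ‖ ^ 2) ^ (s - 2)) +
      K * (ENNReal.ofReal ((1 - ρ) ^ (-(s + t))) * ENNReal.ofReal ((1 - ‖ζ‖ ^ 2) ^ (s - 2))) := by
    intro ζ hζ
    by_cases hl : ρ < ‖ζ‖
    · refine le_add_right ?_
      rw [mul_comm]
      gcongr
      exact hρ ζ hζ hl
    · refine le_add_left ?_
      have hq := one_sub_norm_sq_pos hζ
      rw [mul_comm, ← ENNReal.ofReal_mul (Real.rpow_nonneg (by linarith) _)]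
      refine mul_le_mul' (hKb ζ (not_lt.1 hl)) (ENNReal.ofReal_le_ofReal ?_)
      refine mul_le_mul_of_nonneg_right ?_ (Real.rpow_nonneg hq.le _)
      refine Real.rpow_le_rpow_of_nonpos (by linarith) ?_ (by linarith)
      have h1 : ‖(1 : ℂ)‖ - ‖z * (starRingEnd ℂ) ζ‖ ≤ ‖1 - z * (starRingEnd ℂ) ζ‖ :=
        norm_sub_norm_le _ _
      rw [norm_one, norm_mul, Complex.norm_conj] at h1
      have := mem_ball_zero_iff.1 hz
      have := norm_nonneg ζ
      nlinarith
  calc _ ≤ ENNReal.ofReal ((1 - ‖z‖ ^ 2) ^ t) * ∫⁻ ζ in ball (0 : ℂ) 1,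
      (δ * ENNReal.ofReal (‖1 - z * (starRingEnd ℂ) ζ‖ ^ (-(s + t)) * (1 - ‖ζ‖ ^ 2) ^ (s - 2)) +
      K * (ENNReal.ofReal ((1 - ρ) ^ (-(s + t))) * ENNReal.ofReal ((1 - ‖ζ‖ ^ 2) ^ (s - 2)))) := by
        exact mul_le_mul_right (setLIntegral_mono_ae' measurableSet_ball
          (Eventually.of_forall hpt)) _
    _ = δ * (ENNReal.ofReal ((1 - ‖z‖ ^ 2) ^ t) * ∫⁻ ζ in ball (0 : ℂ) 1,
          ENNReal.ofReal (‖1 - z * (starRingEnd ℂ) ζ‖ ^ (-(s + t)) * (1 - ‖ζ‖ ^ 2) ^ (s - 2))) +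
        ENNReal.ofReal ((1 - ‖z‖ ^ 2) ^ t) * (K * (ENNReal.ofReal ((1 - ρ) ^ (-(s + t))) *
          ∫⁻ ζ in ball (0 : ℂ) 1, ENNReal.ofReal ((1 - ‖ζ‖ ^ 2) ^ (s - 2)))) := by
        have hm := measurable_kernel₂ z (-(s + t)) (s - 2)
        rw [lintegral_add_left (hm.const_mul _), lintegral_const_mul _ hm,
          lintegral_const_mul' _ _ hK, lintegral_const_mul' _ _ ENNReal.ofReal_ne_top]
        ring
    _ ≤ δ * ENNReal.ofReal R + ENNReal.ofReal ((1 - ‖z‖ ^ 2) ^ t) * L := by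
        rw [hL]
        gcongr
        exact hFR' z hz
    _ ≤ ε / 2 + ε / 2 := add_le_add hδR hzL
    _ = ε := ENNReal.add_halves ε

/-! ### The logarithmic factor -/

lemma pc_two (n : ℕ) : pc 2 n = n + 1 := by
  induction n with
  | zero => simp [pc_zero]
  | succ k ih =>
    rw [pc_succ, ih]
    push_cast
    field_simp
    ring

/-- The difference between the coefficients of the logarithmic series and those of
`-(b + 2) log (1 - x)`. For `n = 0` the quotient `(b + 2) / n` is `0` by convention, which is the
constant coefficient of that logarithm. -/
noncomputable def lc (b : ℝ) (n : ℕ) : ℝ := pc 2 n * dm b n - (b + 2) / n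

lemma summable_lc {b : ℝ} (hb : -1 < b) : Summable fun n => ‖lc b n‖ := by
  rw [← summable_nat_add_iff 1]
  have hs : Summable fun n : ℕ => 2 * (b + 2) ^ 2 * (1 / ((n + 1 : ℕ) : ℝ) ^ 2) :=
    ((summable_nat_add_iff 1).2 (Real.summable_one_div_nat_pow.2 one_lt_two)).mul_left _
  refine Summable.of_nonneg_of_le (fun _ => norm_nonneg _) (fun n => ?_) hs
  have hn : (1 : ℝ) ≤ ((n + 1 : ℕ) : ℝ) := by push_cast; linarith [Nat.cast_nonneg (α := ℝ) n]
  rw [lc, pc_two, dm]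
  set m : ℝ := ((n + 1 : ℕ) : ℝ) with hm
  have h0 : m ≠ 0 := by linarith
  have h1 : 0 < m + b + 2 := by linarith
  have h2 : 0 < m + b + 3 := by linarith
  have e : (m + 1) * ((b + 2) / ((m + b + 2) * (m + b + 3))) - (b + 2) / m
      = -((b + 2) * (2 * (b + 2) * m + (b + 2) * (b + 3)) / (m * ((m + b + 2) * (m + b + 3)))) := by
    field_simp
    ring
  have hb2 : 0 < b + 2 := by linarith
  have hb3 : 0 < b + 3 := by linarith
  have hm0 : 0 < m := by linarith
  rw [e, norm_neg, Real.norm_eq_abs, abs_of_nonneg (by positivity), mul_one_div,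
    div_le_div_iff₀ (by positivity) (by positivity)]
  have k1 : 2 * (b + 2) * m + (b + 2) * (b + 3) ≤ 2 * (b + 2) * (m + b + 3) := by nlinarith
  have k2 : m ≤ m + b + 2 := by linarith
  calc (b + 2) * (2 * (b + 2) * m + (b + 2) * (b + 3)) * m ^ 2
      ≤ (b + 2) * (2 * (b + 2) * (m + b + 3)) * m ^ 2 := by gcongr
    _ = 2 * (b + 2) ^ 2 * (m + b + 3) * m * m := by ring
    _ ≤ 2 * (b + 2) ^ 2 * (m + b + 3) * m * (m + b + 2) := by gcongr
    _ = _ := by ring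

lemma hasSum_log_series {b : ℝ} (hb : -1 < b) {x : ℂ} (hx : ‖x‖ < 1) :
    HasSum (fun n => (pc 2 n : ℂ) * dm b n * x ^ n)
      ((∑' n, (lc b n : ℂ) * x ^ n) - (b + 2) * Complex.log (1 - x)) := by
  have h1 : Summable fun n => (lc b n : ℂ) * x ^ n := by
    refine Summable.of_norm (Summable.of_nonneg_of_le (fun _ => norm_nonneg _) (fun n => ?_)
      (summable_lc hb))
    rw [norm_mul, norm_pow, Complex.norm_real]
    exact mul_le_of_le_one_right (norm_nonneg _) (pow_le_one₀ (norm_nonneg _) hx.le)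
  have h2 := (Complex.hasSum_taylorSeries_neg_log hx).mul_left ((b : ℂ) + 2)
  have h3 := h1.hasSum.add h2
  rw [mul_neg, ← sub_eq_add_neg] at h3
  refine h3.congr_fun fun n => ?_
  rw [lc]
  push_cast
  ring

/-- Up to a bounded error the series with coefficients `pc 2 n * dm b n` has the logarithmic singularity `(b + 2) log (1 / (1 - x))`. -/
lemma norm_log_series_add_le {b : ℝ} (hb : -1 < b) : ∃ C, 0 ≤ C ∧ ∀ x : ℂ, ‖x‖ < 1 →
    ‖∑' n, (pc 2 n : ℂ) * dm b n * x ^ n + (b + 2) * Complex.log (1 - x)‖ ≤ C := by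
  refine ⟨∑' n, ‖lc b n‖, tsum_nonneg fun _ => norm_nonneg _, fun x hx => ?_⟩
  rw [(hasSum_log_series hb hx).tsum_eq, sub_add_cancel]
  refine tsum_of_norm_bounded (summable_lc hb).hasSum fun n => ?_
  rw [norm_mul, norm_pow, Complex.norm_real]
  exact mul_le_of_le_one_right (norm_nonneg _) (pow_le_one₀ (norm_nonneg _) hx.le)

/-- The logarithm of `(2 / q) y` grows more slowly than a square root, and its argument is bounded. -/
lemma norm_log_add_log_le {q : ℝ} (hq : 0 < q) {y : ℂ} (hy : q / 2 ≤ ‖y‖) :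
    ‖((Real.log (2 / q) : ℝ) : ℂ) + Complex.log y‖
      ≤ (2 + Real.pi) * (2 / q * ‖y‖) ^ (1 / 2 : ℝ) := by
  have hy0 : 0 < ‖y‖ := by linarith
  have h1 : 1 ≤ 2 / q * ‖y‖ := by
    rw [div_mul_eq_mul_div, le_div_iff₀ hq]; linarith
  have e : ((Real.log (2 / q) : ℝ) : ℂ) + Complex.log y
      = ((Real.log (2 / q * ‖y‖) : ℝ) : ℂ) + (y.arg : ℂ) * I := by
    rw [Real.log_mul (by positivity) hy0.ne', Complex.log]
    push_cast
    ring
  rw [e]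
  refine (norm_add_le _ _).trans ?_
  rw [norm_mul, Complex.norm_I, mul_one, Complex.norm_real, Complex.norm_real, Real.norm_eq_abs,
    Real.norm_eq_abs, abs_of_nonneg (Real.log_nonneg h1), add_mul]
  refine add_le_add ?_ ?_
  · refine (Real.log_le_rpow_div (by positivity) (ε := 1 / 2) (by norm_num)).trans (le_of_eq ?_)
    ring
  · refine (Complex.abs_arg_le_pi y).trans (le_mul_of_one_le_right Real.pi_pos.le ?_)
    exact Real.one_le_rpow h1 (by norm_num)

/-- Replacing `log (2 / (1 - |z|²))` by the logarithmic series in `z w̄` costs an error of order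
`(|1 - z w̄| / (1 - |z|²)) ^ (1 / 2)`, which a kernel integral of slightly smaller exponent absorbs. -/
lemma log_sub_series_le {b : ℝ} (hb : -1 < b) : ∃ C, 0 ≤ C ∧ ∀ z ∈ ball (0 : ℂ) 1,
    ∀ w ∈ ball (0 : ℂ) 1, ‖(((b + 2) * Real.log (2 / (1 - ‖z‖ ^ 2)) : ℝ) : ℂ)
      - ∑' n, (pc 2 n : ℂ) * dm b n * (z * (starRingEnd ℂ) w) ^ n‖
      ≤ C * ((1 - ‖z‖ ^ 2) ^ (-(1 / 2) : ℝ) * ‖1 - z * (starRingEnd ℂ) w‖ ^ (1 / 2 : ℝ)) := by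
  obtain ⟨C, hC, h⟩ := norm_log_series_add_le hb
  have hb2 : 0 < b + 2 := by linarith
  refine ⟨((b + 2) * (2 + Real.pi) + C) * 2 ^ (1 / 2 : ℝ), by positivity, fun z hz w hw => ?_⟩
  have hq := one_sub_norm_sq_pos hz
  have hn := norm_one_sub_pos hz hw
  have hx := norm_mul_conj_lt hz hw
  have hhalf := half_le_norm_one_sub hz hw
  set x := z * (starRingEnd ℂ) w
  set S := ∑' n, (pc 2 n : ℂ) * dm b n * x ^ n
  set q := 1 - ‖z‖ ^ 2
  have e : (((b + 2) * Real.log (2 / q) : ℝ) : ℂ) - S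
      = ((b + 2 : ℝ) : ℂ) * (((Real.log (2 / q) : ℝ) : ℂ) + Complex.log (1 - x))
        - (S + (b + 2) * Complex.log (1 - x)) := by
    push_cast
    ring
  have h1 : 1 ≤ 2 / q * ‖1 - x‖ := by
    rw [div_mul_eq_mul_div, le_div_iff₀ hq]; linarith
  have hY : 1 ≤ (2 / q * ‖1 - x‖) ^ (1 / 2 : ℝ) := Real.one_le_rpow h1 (by norm_num)
  have hYe : (2 / q * ‖1 - x‖) ^ (1 / 2 : ℝ)
      = 2 ^ (1 / 2 : ℝ) * (q ^ (-(1 / 2) : ℝ) * ‖1 - x‖ ^ (1 / 2 : ℝ)) := by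
    rw [Real.mul_rpow (by positivity) hn.le, Real.div_rpow zero_le_two hq.le, Real.rpow_neg hq.le]
    ring
  rw [e, mul_assoc, ← hYe]
  refine (norm_sub_le _ _).trans ?_
  rw [norm_mul, Complex.norm_real, Real.norm_eq_abs, abs_of_pos hb2]
  have k1 := norm_log_add_log_le hq hhalf
  have k2 := h x hx
  calc _ ≤ (b + 2) * ((2 + Real.pi) * (2 / q * ‖1 - x‖) ^ (1 / 2 : ℝ)) + C * 1 := by
        rw [mul_one]; gcongr
    _ ≤ (b + 2) * ((2 + Real.pi) * (2 / q * ‖1 - x‖) ^ (1 / 2 : ℝ)) +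
          C * (2 / q * ‖1 - x‖) ^ (1 / 2 : ℝ) := by gcongr
    _ = _ := by ring

lemma continuousOn_log_series {b : ℝ} (hb : -1 < b) {z : ℂ} (hz : z ∈ ball (0 : ℂ) 1) :
    ContinuousOn (fun w => ∑' n, (pc 2 n : ℂ) * dm b n * (z * (starRingEnd ℂ) w) ^ n) (ball 0 1) ∧
    ∃ K, ∀ w ∈ ball (0 : ℂ) 1,
      ‖∑' n, (pc 2 n : ℂ) * dm b n * (z * (starRingEnd ℂ) w) ^ n‖ ≤ K := by
  have hs := (hasSum_log_series hb (mem_ball_zero_iff.1 hz)).summable.norm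
  have hle : ∀ n, ∀ w ∈ ball (0 : ℂ) 1, ‖(pc 2 n : ℂ) * dm b n * (z * (starRingEnd ℂ) w) ^ n‖ ≤
      ‖(pc 2 n : ℂ) * dm b n * z ^ n‖ := by
    intro n w hw
    rw [mul_pow, ← mul_assoc, norm_mul _ ((starRingEnd ℂ) w ^ n), norm_pow, Complex.norm_conj]
    exact mul_le_of_le_one_right (norm_nonneg _)
      (pow_le_one₀ (norm_nonneg _) (mem_ball_zero_iff.1 hw).le)
  refine ⟨continuousOn_tsum (fun n => ?_) hs hle,
    ∑' n, ‖(pc 2 n : ℂ) * dm b n * z ^ n‖, fun w hw => ?_⟩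
  · have := Complex.continuous_conj
    fun_prop
  · exact tsum_of_norm_bounded hs.hasSum fun n => hle n w hw

lemma integrable_tf {s : ℝ} (hs : 0 < s) (j : ℕ) {μ : Measure ℂ} [IsFiniteMeasure μ] {z : ℂ}
    (hz : z ∈ ball (0 : ℂ) 1) : Integrable (tf s j z) (μ.restrict (ball 0 1)) :=
  Integrable.of_bound
    ((differentiableOn_tf s j hz).continuousOn.aestronglyMeasurable measurableSet_ball) _
    ((ae_restrict_mem measurableSet_ball).mono fun _ hw => norm_tf_le_const hs j hz hw)

/-- The main estimate. The factor `log (2 / (1 - |z|²))` is split into the series `S`, which is paired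
with the test function by duality, and an error controlled by `tendsto_lintegral_kernel` with
`t = 1 / 2`. -/
lemma tendsto_log_mul_integral {s b : ℝ} (hs : 1 < s) (hb : -1 < b) {μ : Measure ℂ}
    [IsFiniteMeasure μ]
    (hT : ∀ j, Tendsto (fun z => wnorm 1 b (Toep μ b (tf s j z))) bdry (𝓝 0)) :
    Tendsto (fun z => ‖(((b + 2) * Real.log (2 / (1 - ‖z‖ ^ 2)) : ℝ) : ℂ) *
      ∫ w in ball (0 : ℂ) 1, tf s 1 z w ∂μ‖ₑ) bdry (𝓝 0) := by
  have hs0 : 0 < s := by linarith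
  have hB := tendsto_ber hs0 hb (hT 0)
  have hQ := tendsto_lintegral_kernel hs (t := 1 / 2) (by norm_num) hB
  have hP := tendsto_pairing (σ := 0) (M := 4 * 2 ^ (0 : ℝ)) hs0 hb (hT 1)
    (α := fun n => (pc 2 n : ℂ)) (G := fun y => 1 / (1 - y) ^ ((2 : ℝ) : ℂ))
    (fun y hy => hasSum_pc 2 hy) (continuousOn_one_div_cpow 2) (fun z hz u hu => by
      have := weight_mul_kernel_le (c := 0) le_rfl (i := 2) le_rfl hz hu
      simpa only [Nat.cast_ofNat, zero_add] using this)
  obtain ⟨C, hC, hlog⟩ := log_sub_series_le hb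
  have hlim := hP.add (ENNReal.Tendsto.const_mul hQ (a := ENNReal.ofReal C)
    (Or.inr ENNReal.ofReal_ne_top))
  rw [mul_zero, add_zero] at hlim
  refine tendsto_of_tendsto_of_tendsto_of_le_of_le' tendsto_const_nhds hlim
    (Eventually.of_forall fun _ => zero_le) ?_
  filter_upwards [eventually_mem_ball_bdry] with z hz
  have hq := one_sub_norm_sq_pos hz
  set S : ℂ → ℂ := fun w => ∑' n, (pc 2 n : ℂ) * dm b n * (z * (starRingEnd ℂ) w) ^ n with hS
  set Λ : ℂ := (((b + 2) * Real.log (2 / (1 - ‖z‖ ^ 2)) : ℝ) : ℂ) with hΛ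
  obtain ⟨hSc, K, hK⟩ := continuousOn_log_series hb hz
  have hti := integrable_tf hs0 1 (μ := μ) hz
  have hint : Integrable (fun w => tf s 1 z w * S w) (μ.restrict (ball 0 1)) :=
    hti.mul_bdd (c := K) (hSc.aestronglyMeasurable measurableSet_ball)
      ((ae_restrict_mem measurableSet_ball).mono hK)
  have hint2 : Integrable (fun w => tf s 1 z w * (Λ - S w)) (μ.restrict (ball 0 1)) := by
    simp only [mul_sub]
    exact (hti.mul_const Λ).sub hint
  have e : Λ * ∫ w in ball (0 : ℂ) 1, tf s 1 z w ∂μ = (∫ w in ball (0 : ℂ) 1, tf s 1 z w * S w ∂μ)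
      + ∫ w in ball (0 : ℂ) 1, tf s 1 z w * (Λ - S w) ∂μ := by
    rw [← integral_add hint hint2, ← integral_const_mul]
    congr 1
    funext w
    ring
  rw [e, Real.rpow_zero, ENNReal.ofReal_one, one_mul]
  refine (enorm_add_le _ _).trans (add_le_add le_rfl ?_)
  refine (enorm_integral_le_lintegral_enorm _).trans ?_
  rw [← mul_assoc, ← ENNReal.ofReal_mul hC, ← lintegral_const_mul' _ _ ENNReal.ofReal_ne_top]
  refine setLIntegral_mono_ae' measurableSet_ball (Eventually.of_forall fun w hw => ?_)
  rw [← ENNReal.ofReal_mul (by positivity), ← ofReal_norm, norm_mul]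
  refine ENNReal.ofReal_le_ofReal ?_
  have hn := norm_one_sub_pos hz hw
  set N := ‖1 - z * (starRingEnd ℂ) w‖ with hN
  have e1 : (1 - ‖z‖ ^ 2) ^ (1 / 2 : ℝ) = (1 - ‖z‖ ^ 2) * (1 - ‖z‖ ^ 2) ^ (-(1 / 2) : ℝ) := by
    rw [← Real.rpow_one_add' hq.le (by norm_num)]; norm_num
  have e2 : N ^ (-(s + 1 / 2)) = N ^ (-(s + 1)) * N ^ (1 / 2 : ℝ) := by
    rw [← Real.rpow_add hn]; congr 1; ring
  calc _ ≤ ((1 - ‖z‖ ^ 2) * N ^ (-(s + 1))) *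
        (C * ((1 - ‖z‖ ^ 2) ^ (-(1 / 2) : ℝ) * N ^ (1 / 2 : ℝ))) :=
        mul_le_mul (norm_tf_le s 1 hz hw) (hlog z hz w hw) (norm_nonneg _) (by positivity)
    _ = _ := by rw [e1, e2]; ring

/-! ### The derivative of the symbol -/

lemma hasDerivAt_kernel {s : ℝ} {z w : ℂ} (hz : z ∈ ball (0 : ℂ) 1) (hw : w ∈ ball (0 : ℂ) 1) :
    HasDerivAt (fun z : ℂ => 1 / (1 - z * (starRingEnd ℂ) w) ^ ((s : ℝ) : ℂ))
      (s * ((starRingEnd ℂ) w / (1 - z * (starRingEnd ℂ) w) ^ ((s + 1 : ℝ) : ℂ))) z := by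
  have hsl := one_sub_mem_slitPlane (norm_mul_conj_lt hz hw)
  have h := (((hasDerivAt_id z).mul_const ((starRingEnd ℂ) w)).const_sub 1).cpow_const
    (c := -(s : ℂ)) hsl
  simp only [id_eq] at h
  convert h using 1
  · funext y
    rw [Complex.cpow_neg, one_div]
  · have : -(s : ℂ) - 1 = -((s + 1 : ℝ) : ℂ) := by push_cast; ring
    rw [this, Complex.cpow_neg]
    ring

lemma aestronglyMeasurable_kernel (z : ℂ) (c : ℂ) (μ : Measure ℂ) :
    AEStronglyMeasurable (fun w : ℂ => 1 / (1 - z * (starRingEnd ℂ) w) ^ c) μ := by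
  have : Measurable (starRingEnd ℂ) := Complex.continuous_conj.measurable
  exact (by fun_prop : Measurable fun w : ℂ => 1 / (1 - z * (starRingEnd ℂ) w) ^ c).aestronglyMeasurable

lemma norm_one_div_kernel_le {s : ℝ} (hs : 0 ≤ s) {z w : ℂ} (hz : z ∈ ball (0 : ℂ) 1)
    (hw : w ∈ ball (0 : ℂ) 1) :
    ‖1 / (1 - z * (starRingEnd ℂ) w) ^ ((s : ℝ) : ℂ)‖ ≤ ((1 - ‖z‖ ^ 2) / 2) ^ (-s) := by
  rw [norm_div, norm_one, Complex.norm_cpow_real, one_div,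
    ← Real.rpow_neg (norm_nonneg _)]
  exact rpow_kernel_le hs hz hw

/-- Differentiation under the integral sign for the symbol `T_{μ,γ}(1)`, with `s = 2 + γ`. -/
lemma hasDerivAt_Toep_one {s γ : ℝ} (hs : 0 < s) (hγ : 2 + γ = s) {μ : Measure ℂ}
    [IsFiniteMeasure μ] {z : ℂ} (hz : z ∈ ball (0 : ℂ) 1) :
    HasDerivAt (Toep μ γ fun _ => 1)
      (∫ w in ball (0 : ℂ) 1,
        s * ((starRingEnd ℂ) w / (1 - z * (starRingEnd ℂ) w) ^ ((s + 1 : ℝ) : ℂ)) ∂μ) z := by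
  have hz1 : ‖z‖ < 1 := mem_ball_zero_iff.1 hz
  set r := (1 + ‖z‖) / 2 with hr
  have hr0 : 0 ≤ r := by positivity
  have hr1 : r < 1 := by rw [hr]; linarith
  have hsub : ball (0 : ℂ) r ⊆ ball 0 1 := ball_subset_ball hr1.le
  have hnhds : ball (0 : ℂ) r ∈ 𝓝 z :=
    isOpen_ball.mem_nhds (mem_ball_zero_iff.2 (by rw [hr]; linarith))
  have hF : (Toep μ γ fun _ => 1) = fun z => ∫ w in ball (0 : ℂ) 1,
      1 / (1 - z * (starRingEnd ℂ) w) ^ ((s : ℝ) : ℂ) ∂μ := by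
    funext y
    rw [Toep, hγ]
  rw [hF]
  refine (hasDerivAt_integral_of_dominated_loc_of_deriv_le (μ := μ.restrict (ball 0 1))
    (F' := fun y w => s * ((starRingEnd ℂ) w / (1 - y * (starRingEnd ℂ) w) ^ ((s + 1 : ℝ) : ℂ)))
    (bound := fun _ => s * ((1 - r ^ 2) / 2) ^ (-(s + 1))) hnhds
    (Eventually.of_forall fun y => aestronglyMeasurable_kernel y _ _) ?_ ?_ ?_
    (integrable_const _) ?_).2
  · exact Integrable.of_bound (aestronglyMeasurable_kernel z _ _) _
      ((ae_restrict_mem measurableSet_ball).mono fun w hw => norm_one_div_kernel_le hs.le hz hw)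
  · simp only [div_eq_mul_one_div ((starRingEnd ℂ) _)]
    exact (Complex.continuous_conj.aestronglyMeasurable.mul
      (aestronglyMeasurable_kernel z _ _)).const_mul _
  · refine (ae_restrict_mem measurableSet_ball).mono fun w hw y hy => ?_
    have hyr : ‖y‖ < r := mem_ball_zero_iff.1 hy
    rw [div_eq_mul_one_div, norm_mul, norm_mul, Complex.norm_conj, Complex.norm_real, Real.norm_eq_abs,
      abs_of_pos hs]
    refine mul_le_mul_of_nonneg_left ?_ hs.le
    refine (mul_le_of_le_one_left (norm_nonneg _) (mem_ball_zero_iff.1 hw).le).trans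
      ((norm_one_div_kernel_le (by linarith) (hsub hy) hw).trans ?_)
    refine Real.rpow_le_rpow_of_nonpos (by nlinarith) ?_ (by linarith)
    have := norm_nonneg y
    nlinarith
  · exact (ae_restrict_mem measurableSet_ball).mono fun w hw y hy => hasDerivAt_kernel (hsub hy) hw

/-- The quantity in the Bloch norm of the symbol is the modulus of an integral of a test function. -/
lemma norm_deriv_Toep_one {s γ : ℝ} (hs : 0 < s) (hγ : 2 + γ = s) {μ : Measure ℂ}
    [IsFiniteMeasure μ] {z : ℂ} (hz : z ∈ ball (0 : ℂ) 1) :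
    (1 - ‖z‖ ^ 2) * ‖deriv (Toep μ γ fun _ => 1) z‖
      = s * ‖∫ w in ball (0 : ℂ) 1, tf s 1 z w ∂μ‖ := by
  have hq := one_sub_norm_sq_pos hz
  rw [(hasDerivAt_Toep_one hs hγ hz).deriv, integral_const_mul, norm_mul, Complex.norm_real,
    Real.norm_eq_abs, abs_of_pos hs]
  have e : ∫ w in ball (0 : ℂ) 1, tf s 1 z w ∂μ = (starRingEnd ℂ) (((1 - ‖z‖ ^ 2 : ℝ) : ℂ) *
      ∫ w in ball (0 : ℂ) 1,
        (starRingEnd ℂ) w / (1 - z * (starRingEnd ℂ) w) ^ ((s + 1 : ℝ) : ℂ) ∂μ) := by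
    rw [← integral_const_mul, ← integral_conj]
    refine setIntegral_congr_fun measurableSet_ball fun w hw => ?_
    have hconj : 1 - (starRingEnd ℂ) z * w = (starRingEnd ℂ) (1 - z * (starRingEnd ℂ) w) := by simp
    simp only [tf]
    rw [hconj, Complex.conj_cpow _ _ (Complex.mem_slitPlane_iff_arg.1
      (one_sub_mem_slitPlane (norm_mul_conj_lt hz hw))).1, Complex.conj_ofReal]
    simp only [map_mul, map_div₀, Complex.conj_ofReal, Complex.conj_conj]
    ring
  rw [e, Complex.norm_conj, norm_mul, Complex.norm_real, Real.norm_eq_abs, abs_of_pos hq]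
  ring

theorem stmt19 (p a b : ℝ) (hp0 : 0 < p) (hp1 : p ≤ 1) (ha : -1 < a) (hb : -1 < b)
    (μ : Measure ℂ) [IsFiniteMeasure μ]
    (hcpt : ∀ f : ℕ → ℂ → ℂ,
      (∀ n, DifferentiableOn ℂ (f n) (ball (0 : ℂ) 1)) →
      (∃ M : ℝ≥0, ∀ n, wnorm p a (f n) ≤ M) →
      TendstoLocallyUniformlyOn f (fun _ => 0) atTop (ball (0 : ℂ) 1) →
      Tendsto (fun n => wnorm 1 b (Toep μ b (f n))) atTop (𝓝 0)) :
    ∀ ε > (0 : ℝ), ∃ δ ∈ Set.Ioo (0 : ℝ) 1, ∀ z ∈ ball (0 : ℂ) 1, δ < ‖z‖ →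
      (1 - ‖z‖ ^ 2) * Real.log (2 / (1 - ‖z‖ ^ 2)) *
        ‖deriv (Toep μ ((2 + a - p) / p - 1) fun _ => 1) z‖ < ε := by
  intro ε hε
  set s := (2 + a) / p with hs
  have hs1 : 1 < s := by rw [hs, one_lt_div hp0]; linarith
  have hs0 : 0 < s := by linarith
  have hb2 : 0 < b + 2 := by linarith
  have hγ : 2 + ((2 + a - p) / p - 1) = s := by rw [hs]; field_simp; ring
  have hlim := tendsto_log_mul_integral hs1 hb fun j => tendsto_wnorm_tf hp0 ha hcpt j
  have hev := hlim.eventually_lt_const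
    (show (0 : ℝ≥0∞) < ENNReal.ofReal (ε * (b + 2) / s) from ENNReal.ofReal_pos.2 (by positivity))
  rw [bdry, eventually_comap] at hev
  obtain ⟨ρ, hρ1, hρ⟩ := mem_nhdsLT_iff_exists_Ioo_subset.1 hev
  refine ⟨max ρ (1 / 2), ⟨by positivity, max_lt hρ1 (by norm_num)⟩, fun z hz hδ => ?_⟩
  have hz1 : ‖z‖ < 1 := mem_ball_zero_iff.1 hz
  have hq := one_sub_norm_sq_pos hz
  have h : ‖(((b + 2) * Real.log (2 / (1 - ‖z‖ ^ 2)) : ℝ) : ℂ) *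
      ∫ w in ball (0 : ℂ) 1, tf s 1 z w ∂μ‖ₑ < ENNReal.ofReal (ε * (b + 2) / s) :=
    hρ (a := ‖z‖) ⟨(le_max_left _ _).trans_lt hδ, hz1⟩ z rfl
  have hL : 0 ≤ Real.log (2 / (1 - ‖z‖ ^ 2)) :=
    Real.log_nonneg ((one_le_div hq).2 (by nlinarith [sq_nonneg ‖z‖]))
  rw [← ofReal_norm, ENNReal.ofReal_lt_ofReal_iff (by positivity), norm_mul, Complex.norm_real,
    Real.norm_eq_abs, abs_of_nonneg (mul_nonneg hb2.le hL), lt_div_iff₀ hs0] at h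
  rw [mul_right_comm, norm_deriv_Toep_one hs0 hγ hz]
  refine lt_of_mul_lt_mul_right ?_ hb2.le
  linarith
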